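/- (Simultaneous embedding over an algebraically closed base.) Let k be an algebraically closed field. For i = 1, 2 let D_i be a division ring, finite-dimensional over its center K_i, where K_i is a field extension of k that is finitely generated as a field extension of k. Then there exists a division ring E, finite-dimensional over its center, together with injective k-algebra homomorphisms D₁ → E and D₂ → E. -/

import Mathlib

/-- A division algebra over `k`: a division ring, finite-dimensional over its center,
equipped with a `k`-algebra structure. -/
structure FinDimDivisionAlgebraOver (k : Type) [Field k] : Type 1 where
  carrier : Type
  [divisionRing : DivisionRing carrier]
  [algebra : Algebra k carrier]
  [finiteDimensional : FiniteDimensional (Subring.center carrier) carrier]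

attribute [instance] FinDimDivisionAlgebraOver.divisionRing
attribute [instance] FinDimDivisionAlgebraOver.algebra
attribute [instance] FinDimDivisionAlgebraOver.finiteDimensional

/-!
A division algebra `D` of degree `n` over its center `K` is split by a finite Galois extension
`L/K`, and descent gives matrices `H_σ` over `L` with `H_σ · σ(H_τ) = c(σ, τ) • H_{στ}`: a
projective semilinear representation of the Galois group. Representations with multiplier `c` have
degree divisible by `n`. As representations can be multiplied, dualized and raised to symmetric
powers, those with multiplier `c ^ t`, where `p ∤ t`, have degree divisible by the `p`-part of `n`.

Let `Ω` be the field of fractions of `L₁ ⊗ L₂`. A `k`-algebra has points in an ultrapower of `k`,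
since its finitely generated subalgebras have points in `k`. Hence `Ω` embeds equivariantly into
ultrapowers of `L₁` and of `L₂`, and the divisibility of degrees persists over `Ω` for both
algebras.

Now let `g` be a matrix of size `N = n₁ n₂` with independent entries over `Ω` and `Ψ = Ω(g)`. Let
`D₁` act on the vectors `Ψ ^ N`, and let `D₂` act on them through conjugation by `g`. Both actions
commute with the semilinear maps `v ↦ A s(v)` for which `g ↦ A⁻¹ g B` extends an automorphism `s`
of `Ω` and `A`, `B` intertwine `D₁`, `D₂`. The commutant `E` of all these maps is a division ring
as soon as the dimension of every stable subspace `P` is divisible by `N`. That dimension is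
encoded in the Hilbert series of the polynomial vectors in `P`, so it suffices that the
homogeneous components have dimension divisible by `N`. These components decompose into isomorphic
weight spaces of diagonal twists, and the weight spaces carry projective representations with
multipliers `c₁ ^ t₁` and `c₂ ^ t₂`.
-/

namespace CommonEmbedding

section HilbertSeries

open PowerSeries

variable {τ : Type*} (R : Type*) [CommRing R]

/-- The Hilbert series, with coefficients in `R`, of a set `J` of exponents: its `j`-th coefficient
is the number of elements of `J` of total degree `j`. -/
noncomputable def hilbertSeries (J : Set (τ →₀ ℕ)) : R⟦X⟧ :=
  mk fun j => (Set.ncard {μ | μ ∈ J ∧ μ.degree = j} : R)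

/-- The generating series of the set of natural numbers `m` with `min m A = n`. -/
noncomputable def minFiberSeries (A n : ℕ) : R⟦X⟧ :=
  mk fun m => if min m A = n then 1 else 0

theorem exists_mem_iff_inf_const_mem [Finite τ] {J : Set (τ →₀ ℕ)} (hJ : IsUpperSet J) :
    ∃ A : ℕ, ∀ μ : τ →₀ ℕ, μ ⊓ Finsupp.equivFunOnFinite.symm (fun _ => A) ∈ J ↔ μ ∈ J := by
  have hfin : {μ | Minimal (· ∈ J) μ}.Finite :=
    WellQuasiOrderedLE.finite_of_isAntichain (setOfPred_minimal_antichain _)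
  obtain ⟨A, hA⟩ := (hfin.image Finsupp.degree).bddAbove
  refine ⟨A, fun μ => ⟨hJ inf_le_left, fun hμ => ?_⟩⟩
  obtain ⟨m, hle, hm⟩ := exists_minimal_le_of_wellFoundedLT (· ∈ J) μ hμ
  refine hJ (le_inf hle fun i => ?_) hm.prop
  exact (Finsupp.le_degree i m).trans (hA ⟨m, hm, rfl⟩)

theorem one_sub_X_mul_minFiberSeries {A n : ℕ} (hn : n ≤ A) :
    (1 - X) * minFiberSeries R A n =
      ((if n = A then Polynomial.X ^ A else (1 - Polynomial.X) * Polynomial.X ^ n :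
        Polynomial R) : R⟦X⟧) := by
  ext m
  split_ifs with h <;> cases m <;>
    simp only [minFiberSeries, sub_mul, one_mul, map_sub, coeff_zero_X_mul, coeff_succ_X_mul,
      coeff_mk, Polynomial.coe_sub, Polynomial.coe_mul, Polynomial.coe_X, Polynomial.coe_pow,
      coeff_X_pow, sub_zero] <;> grind

theorem hilbertSeries_eq_sum_prod_minFiberSeries [Fintype τ] [DecidableEq τ]
    {J : Set (τ →₀ ℕ)} {A : ℕ} {α : τ →₀ ℕ} (hα : ∀ i, α i = A) (hA : ∀ μ, μ ⊓ α ∈ J ↔ μ ∈ J)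
    [DecidablePred (· ∈ J)] :
    hilbertSeries R J = ∑ ν ∈ Finset.Icc 0 α with ν ∈ J, ∏ i, minFiberSeries R A (ν i) := by
  classical
  ext j
  have hdeg (μ : τ →₀ ℕ) : μ ∈ Finset.univ.finsuppAntidiag j ↔ μ.degree = j := by
    simp [Finset.mem_finsuppAntidiag, Finsupp.degree_eq_sum]
  have hset : {μ | μ ∈ J ∧ μ.degree = j} = ((Finset.univ.finsuppAntidiag j).filter (· ∈ J)) := by
    ext μ
    simp only [Set.mem_ofPred_eq, Finset.coe_filter, hdeg, and_comm]
  have hprod (μ ν : τ →₀ ℕ) :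
      (∏ i, if min (μ i) A = ν i then (1 : R) else 0) = if μ ⊓ α = ν then 1 else 0 := by
    simp [Finset.prod_ite_zero, DFunLike.ext_iff, hα]
  simp only [hilbertSeries, coeff_mk, hset, Set.ncard_coe_finset, map_sum, coeff_prod,
    minFiberSeries, hprod]
  rw [Finset.sum_comm, Finset.card_filter, Nat.cast_sum]
  refine Finset.sum_congr rfl fun μ _ => ?_
  simp [hA, Finset.sum_ite_eq]

/-- Multiplying by `(1 - X) ^ |τ|` clears the denominators of the fibre series of the truncation
`μ ↦ μ ⊓ A`, and at `1` only the fibre over the constant function `A` survives. -/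
theorem exists_polynomial_eq_mul_hilbertSeries [Fintype τ] {J : Set (τ →₀ ℕ)}
    (hJ : IsUpperSet J) [Decidable J.Nonempty] :
    ∃ Q : Polynomial R, (1 - X) ^ Fintype.card τ * hilbertSeries R J = (Q : R⟦X⟧) ∧
      Q.eval 1 = if J.Nonempty then 1 else 0 := by
  classical
  obtain ⟨A, hA⟩ := exists_mem_iff_inf_const_mem hJ
  set α : τ →₀ ℕ := Finsupp.equivFunOnFinite.symm fun _ => A
  have hα (i : τ) : α i = A := rfl
  refine ⟨∑ ν ∈ Finset.Icc 0 α with ν ∈ J, ∏ i,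
    if ν i = A then Polynomial.X ^ A else (1 - Polynomial.X) * Polynomial.X ^ ν i, ?_, ?_⟩
  · rw [hilbertSeries_eq_sum_prod_minFiberSeries R hα hA, Finset.mul_sum,
      ← Polynomial.coeToPowerSeries.ringHom_apply, map_sum]
    refine Finset.sum_congr rfl fun ν hν => ?_
    have hle : ν ≤ α := (Finset.mem_Icc.1 (Finset.mem_filter.1 hν).1).2
    rw [map_prod, ← Finset.card_univ, ← Finset.prod_const, ← Finset.prod_mul_distrib]
    exact Finset.prod_congr rfl fun i _ => one_sub_X_mul_minFiberSeries R (hle i)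
  · have heval (ν : τ →₀ ℕ) : (∏ i, (if ν i = A then Polynomial.X ^ A else
        (1 - Polynomial.X) * Polynomial.X ^ ν i : Polynomial R)).eval 1 =
        if ν = α then 1 else 0 := by
      have hfactor (i : τ) : (if ν i = A then Polynomial.X ^ A else
          (1 - Polynomial.X) * Polynomial.X ^ ν i : Polynomial R).eval 1 =
          if ν i = A then 1 else 0 := by
        split_ifs <;> simp
      simp [Polynomial.eval_prod, hfactor, Finset.prod_ite_zero, DFunLike.ext_iff, hα]
    have hne : J.Nonempty ↔ α ∈ J :=
      ⟨fun ⟨μ, hμ⟩ => hJ inf_le_right ((hA μ).2 hμ), fun h => ⟨α, h⟩⟩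
    simp only [Polynomial.eval_finsetSum, heval, hne, Finset.sum_ite_eq', Finset.mem_filter,
      Finset.mem_Icc, zero_le, le_refl, true_and]

theorem dvd_ncard_nonempty_of_isUpperSet [Finite τ] {ι : Type*} [Fintype ι] {J : ι → Set (τ →₀ ℕ)}
    (hJ : ∀ i, IsUpperSet (J i)) {q : ℕ}
    (h : ∀ j : ℕ, q ∣ ∑ i, Set.ncard {μ | μ ∈ J i ∧ μ.degree = j}) :
    q ∣ Set.ncard {i | (J i).Nonempty} := by
  classical
  let := Fintype.ofFinite τ
  choose Q hQ heval using fun i => exists_polynomial_eq_mul_hilbertSeries (ZMod q) (hJ i)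
  have hseries : ∑ i, hilbertSeries (ZMod q) (J i) = 0 := by
    ext j
    simpa [hilbertSeries] using (ZMod.natCast_eq_zero_iff _ _).2 (h j)
  have hsum : ∑ i, Q i = 0 := by
    apply Polynomial.coe_injective
    rw [← Polynomial.coeToPowerSeries.ringHom_apply, map_sum]
    simp only [Polynomial.coeToPowerSeries.ringHom_apply, ← hQ, ← Finset.mul_sum, hseries,
      mul_zero, Polynomial.coe_zero]
  have hcount := congrArg (Polynomial.eval 1) hsum
  simp only [Polynomial.eval_finsetSum, heval, Finset.sum_boole, Polynomial.eval_zero] at hcount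
  rw [Set.ncard_eq_toFinset_card', Set.toFinset_ofPred]
  exact (ZMod.natCast_eq_zero_iff _ _).1 hcount

end HilbertSeries

section LeadingPositions

variable {K I L : Type*} [Field K] [LinearOrder L] {ord : I → L}

/-- The leading positions of a subspace `V` of `I → K`: the indices of the first nonzero
coordinates of its nonzero vectors, where indices are compared through `ord`. -/
def leadingPositions (ord : I → L) (V : Submodule K (I → K)) : Set I :=
  {i | ∃ v ∈ V, v i ≠ 0 ∧ ∀ l, ord l < ord i → v l = 0}

theorem finrank_eq_ncard_leadingPositions [Finite I] (hord : Function.Injective ord)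
    (V : Submodule K (I → K)) : Module.finrank K V = (leadingPositions ord V).ncard := by
  classical
  let := Fintype.ofFinite I
  let restr : V →ₗ[K] leadingPositions ord V → K :=
    LinearMap.funLeft K K Subtype.val ∘ₗ V.subtype
  have hinj : Function.Injective restr := by
    refine (injective_iff_map_eq_zero _).2 fun v hv => ?_
    by_contra hne
    have hsupp : {i | v.1 i ≠ 0}.Nonempty := Function.ne_iff.1 fun h => hne (Subtype.ext h)
    obtain ⟨i, hi, hmin⟩ := Set.exists_min_image _ ord (Set.toFinite {i | v.1 i ≠ 0}) hsupp
    have hlead : i ∈ leadingPositions ord V :=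
      ⟨v, v.2, hi, fun l hl => of_not_not fun h => (hmin l h).not_gt hl⟩
    exact hi (congrFun hv ⟨i, hlead⟩)
  have hsurj : LinearMap.range restr = ⊤ := by
    by_contra hne
    obtain ⟨φ, hφ, hker⟩ := Submodule.exists_le_ker_of_lt_top _ (lt_top_iff_ne_top.2 hne)
    let c i := φ fun l => if i = l then 1 else 0
    have hsum (w : leadingPositions ord V → K) : φ w = ∑ i, w i * c i :=
      LinearMap.pi_apply_eq_sum_univ φ w
    have hsupp : {i | c i ≠ 0}.Nonempty := by
      by_contra hc
      refine hφ (LinearMap.ext fun w => ?_)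
      have hzero (i) : c i = 0 := of_not_not fun h => hc ⟨i, h⟩
      simp [hsum, hzero]
    obtain ⟨i, hi, hmax⟩ :=
      Set.exists_max_image _ (ord ∘ Subtype.val) (Set.toFinite {i | c i ≠ 0}) hsupp
    obtain ⟨v, hv, hvi, hlt⟩ := i.2
    have hφv : ∑ l, restr ⟨v, hv⟩ l * c l = 0 := by rw [← hsum]; exact hker ⟨_, rfl⟩
    rw [Finset.sum_eq_single i] at hφv
    · exact mul_ne_zero hvi hi hφv
    · intro l _ hl
      rcases (hord.ne (Subtype.coe_ne_coe.2 hl)).lt_or_gt with h | h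
      · simp [restr, hlt l h]
      · rw [of_not_not fun hc => (hmax l hc).not_gt h, mul_zero]
    · exact fun h => (h (Finset.mem_univ i)).elim
  rw [(LinearEquiv.ofBijective restr ⟨hinj, LinearMap.range_eq_top.1 hsurj⟩).finrank_eq,
    Module.finrank_fintype_fun_eq_card, ← Nat.card_eq_fintype_card, Nat.card_coe_set_eq]

end LeadingPositions

noncomputable section GradedRank

open MvPolynomial

variable (Ω τ : Type*) {Ψ ι : Type*} [Field Ω] [Field Ψ] [Algebra (MvPolynomial τ Ω) Ψ]

/-- The vectors of a `Ψ`-subspace `P` of `Ψ ^ ι` with polynomial coordinates. -/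
def polynomialVectors (P : Submodule Ψ (ι → Ψ)) :
    Submodule (MvPolynomial τ Ω) (ι → MvPolynomial τ Ω) :=
  (P.restrictScalars (MvPolynomial τ Ω)).comap
    ((Algebra.linearMap (MvPolynomial τ Ω) Ψ).compLeft ι)

/-- The vectors of `P` whose coordinates are homogeneous polynomials of degree `j`. -/
def homogeneousVectors (P : Submodule Ψ (ι → Ψ)) (j : ℕ) :
    Submodule Ω (ι → MvPolynomial τ Ω) :=
  (polynomialVectors Ω τ P).restrictScalars Ω ⊓
    Submodule.pi Set.univ fun _ => homogeneousSubmodule τ Ω j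

variable {Ω τ} in
theorem mem_polynomialVectors {P : Submodule Ψ (ι → Ψ)} {v : ι → MvPolynomial τ Ω} :
    v ∈ polynomialVectors Ω τ P ↔ (fun i => algebraMap (MvPolynomial τ Ω) Ψ (v i)) ∈ P :=
  Iff.rfl

variable {Ω τ} in
theorem mem_homogeneousVectors {P : Submodule Ψ (ι → Ψ)} {j : ℕ} {v : ι → MvPolynomial τ Ω} :
    v ∈ homogeneousVectors Ω τ P j ↔ v ∈ polynomialVectors Ω τ P ∧ ∀ i, (v i).IsHomogeneous j := by
  simp [homogeneousVectors, Submodule.mem_pi, mem_homogeneousSubmodule]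

/-- The coefficients of a vector of homogeneous polynomials of degree `j`. -/
def homogeneousCoeffs (P : Submodule Ψ (ι → Ψ)) (j : ℕ) :
    homogeneousVectors Ω τ P j →ₗ[Ω] {x : ι × (τ →₀ ℕ) // x.2.degree = j} → Ω :=
  (LinearMap.pi fun x => lcoeff Ω x.1.2 ∘ₗ LinearMap.proj x.1.1) ∘ₗ Submodule.subtype _

variable {Ω τ} in
theorem homogeneousCoeffs_apply {P : Submodule Ψ (ι → Ψ)} {j : ℕ}
    (v : homogeneousVectors Ω τ P j) (x : {x : ι × (τ →₀ ℕ) // x.2.degree = j}) :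
    homogeneousCoeffs Ω τ P j v x = (v.1 x.1.1).coeff x.1.2 :=
  rfl

theorem homogeneousCoeffs_injective (P : Submodule Ψ (ι → Ψ)) (j : ℕ) :
    Function.Injective (homogeneousCoeffs Ω τ P j) := by
  intro v w hvw
  ext i μ
  by_cases hμ : μ.degree = j
  · exact congrFun hvw ⟨(i, μ), hμ⟩
  · rw [((mem_homogeneousVectors.1 v.2).2 i).coeff_eq_zero hμ,
      ((mem_homogeneousVectors.1 w.2).2 i).coeff_eq_zero hμ]

instance [Finite ι] [Finite τ] (j : ℕ) : Finite {x : ι × (τ →₀ ℕ) // x.2.degree = j} :=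
  ((Set.finite_univ.prod (Finsupp.finite_of_degree_eq (σ := τ) j)).subset
    fun _ hx => ⟨trivial, hx⟩ : {x : ι × (τ →₀ ℕ) | x.2.degree = j}.Finite)

instance [Finite ι] [Finite τ] (P : Submodule Ψ (ι → Ψ)) (j : ℕ) :
    Module.Finite Ω (homogeneousVectors Ω τ P j) :=
  Module.Finite.of_injective _ (homogeneousCoeffs_injective Ω τ P j)

variable {τ}

variable (ι) in
/-- Terms of vectors of polynomials are compared first by position and then by monomial. -/
def termOrder (m : MonomialOrder τ) (x : ι × (τ →₀ ℕ)) : ι ×ₗ m.syn :=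
  toLex (x.1, m.toSyn x.2)

theorem termOrder_injective {m : MonomialOrder τ} :
    Function.Injective (termOrder ι m) := fun _ _ h =>
  Prod.ext (congrArg (fun z => (ofLex z).1) h)
    (m.toSyn.injective (congrArg (fun z => (ofLex z).2) h))

section LinearOrder

variable [LinearOrder ι] (m : MonomialOrder τ)

/-- The leading exponents at the position `i` of the homogeneous vectors in `P`, where vectors are
ordered first by position and then by the monomial order `m`, and the smallest term leads. -/
def leadingExponents (P : Submodule Ψ (ι → Ψ)) (i : ι) : Set (τ →₀ ℕ) :=
  {μ | ∃ j, ∃ v ∈ homogeneousVectors Ω τ P j, (v i).coeff μ ≠ 0 ∧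
    (∀ l < i, v l = 0) ∧ ∀ ν, m.toSyn ν < m.toSyn μ → (v i).coeff ν = 0}

theorem isUpperSet_leadingExponents (P : Submodule Ψ (ι → Ψ)) (i : ι) :
    IsUpperSet (leadingExponents Ω m P i) := by
  rintro μ μ' hle ⟨j, v, hv, hμ, hlt, hmin⟩
  obtain ⟨δ, rfl⟩ := exists_add_of_le hle
  rw [mem_homogeneousVectors] at hv
  refine ⟨δ.degree + j, (monomial δ 1 : MvPolynomial τ Ω) • v,
    mem_homogeneousVectors.2 ⟨Submodule.smul_mem _ _ hv.1, fun l => ?_⟩, ?_, fun l hl => ?_,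
    fun ν hν => ?_⟩
  · exact (isHomogeneous_monomial _ rfl).mul (hv.2 l)
  · simpa [add_comm μ, coeff_monomial_mul] using hμ
  · simp [hlt l hl]
  · rw [Pi.smul_apply, smul_eq_mul, coeff_monomial_mul']
    split_ifs with hδ
    · obtain ⟨ν, rfl⟩ := exists_add_of_le hδ
      rw [add_comm μ, map_add, map_add] at hν
      rw [add_tsub_cancel_left, hmin ν (lt_of_add_lt_add_left hν), mul_zero]
    · rfl

variable {m}

theorem termOrder_lt {x y : ι × (τ →₀ ℕ)} :
    termOrder ι m x < termOrder ι m y ↔ x.1 < y.1 ∨ x.1 = y.1 ∧ m.toSyn x.2 < m.toSyn y.2 :=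
  Prod.Lex.toLex_lt_toLex

variable {Ω} in
theorem mem_leadingPositions_homogeneousCoeffs {P : Submodule Ψ (ι → Ψ)} {j : ℕ}
    {x : {x : ι × (τ →₀ ℕ) // x.2.degree = j}} :
    x ∈ leadingPositions (fun y => termOrder ι m y.1)
      (LinearMap.range (homogeneousCoeffs Ω τ P j)) ↔ x.1.2 ∈ leadingExponents Ω m P x.1.1 := by
  obtain ⟨⟨i, μ⟩, rfl⟩ := x
  constructor
  · rintro ⟨_, ⟨v, rfl⟩, hne, hzero⟩
    have hzero' l ν (h : l < i ∨ l = i ∧ m.toSyn ν < m.toSyn μ) : (v.1 l).coeff ν = 0 := by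
      by_cases hν : ν.degree = μ.degree
      · exact hzero ⟨(l, ν), hν⟩ (termOrder_lt.2 h)
      · exact ((mem_homogeneousVectors.1 v.2).2 l).coeff_eq_zero hν
    exact ⟨_, v.1, v.2, hne, fun l hl => ext _ _ fun ν => hzero' l ν (.inl hl),
      fun ν hν => hzero' i ν (.inr ⟨rfl, hν⟩)⟩
  · rintro ⟨j', v, hv, hne, hzero, hmin⟩
    obtain rfl : μ.degree = j' := of_not_not fun h =>
      hne (((mem_homogeneousVectors.1 hv).2 i).coeff_eq_zero h)
    refine ⟨_, ⟨⟨v, hv⟩, rfl⟩, hne, fun ⟨⟨l, ν⟩, hν⟩ hl => ?_⟩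
    rcases termOrder_lt.1 hl with hl | ⟨heq, hl⟩
    · simp [homogeneousCoeffs_apply, hzero l hl]
    · obtain rfl : l = i := heq
      exact hmin ν hl

theorem finrank_homogeneousVectors [Fintype ι] [Finite τ] (m : MonomialOrder τ)
    (P : Submodule Ψ (ι → Ψ)) (j : ℕ) :
    Module.finrank Ω (homogeneousVectors Ω τ P j) =
      ∑ i, Set.ncard {μ | μ ∈ leadingExponents Ω m P i ∧ μ.degree = j} := by
  have (i : ι) : Finite {μ | μ ∈ leadingExponents Ω m P i ∧ μ.degree = j} :=
    (Finsupp.finite_of_degree_eq (σ := τ) j).subset fun _ h => h.2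
  simp only [← Nat.card_coe_set_eq]
  rw [← LinearMap.finrank_range_of_inj (homogeneousCoeffs_injective Ω τ P j),
    finrank_eq_ncard_leadingPositions ((termOrder_injective (m := m)).comp Subtype.val_injective),
    ← Nat.card_coe_set_eq, ← Nat.card_sigma]
  exact Nat.card_congr
    { toFun x := ⟨x.1.1.1, x.1.1.2, mem_leadingPositions_homogeneousCoeffs.1 x.2, x.1.2⟩
      invFun x := ⟨⟨(x.1, x.2.1), x.2.2.2⟩, mem_leadingPositions_homogeneousCoeffs.2 x.2.2.1⟩ }

theorem leadingPositions_id_eq [IsFractionRing (MvPolynomial τ Ω) Ψ] [Finite ι]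
    {P : Submodule Ψ (ι → Ψ)}
    (hP : ∀ v ∈ polynomialVectors Ω τ P, ∀ j,
      (fun i => homogeneousComponent j (v i)) ∈ polynomialVectors Ω τ P) :
    leadingPositions id P = {i | (leadingExponents Ω m P i).Nonempty} := by
  ext i
  constructor
  · rintro ⟨w, hw, hi, hlt⟩
    obtain ⟨b, hb⟩ := IsLocalization.exist_integer_multiples_of_finite
      (nonZeroDivisors (MvPolynomial τ Ω)) w
    choose v hv using hb
    have hvP : v ∈ polynomialVectors Ω τ P := by
      rw [mem_polynomialVectors, funext hv]
      exact (P.restrictScalars (MvPolynomial τ Ω)).smul_mem b.1 hw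
    have hzero (l : ι) : v l = 0 ↔ w l = 0 := by
      rw [← IsFractionRing.to_map_eq_zero_iff (K := Ψ), hv, Algebra.smul_def, mul_eq_zero,
        IsFractionRing.to_map_eq_zero_iff]
      exact or_iff_right (nonZeroDivisors.coe_ne_zero b)
    obtain ⟨μ₀, hμ₀⟩ := ne_zero_iff.1 ((hzero i).not.2 hi)
    have hcomp : (homogeneousComponent μ₀.degree (v i)).support.Nonempty := by
      refine support_nonempty.2 (ne_zero_iff.2 ⟨μ₀, ?_⟩)
      rwa [coeff_homogeneousComponent, if_pos rfl]
    obtain ⟨μ, hμ, hmin⟩ := Finset.exists_min_image _ m.toSyn hcomp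
    refine ⟨μ, μ₀.degree, fun l => homogeneousComponent μ₀.degree (v l),
      mem_homogeneousVectors.2 ⟨hP v hvP _, fun _ => homogeneousComponent_isHomogeneous _ _⟩,
      mem_support_iff.1 hμ, fun l hl => ?_, fun ν hν => ?_⟩
    · simp [(hzero l).2 (hlt l hl)]
    · exact notMem_support_iff.1 fun h => (hmin ν h).not_gt hν
  · rintro ⟨μ, j, v, hv, hne, hlt, -⟩
    refine ⟨_, (mem_homogeneousVectors.1 hv).1, fun h => hne ?_, fun l hl => ?_⟩
    · have : v i = 0 := (IsFractionRing.to_map_eq_zero_iff (K := Ψ)).1 h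
      simp [this]
    · simp [hlt l hl]

end LinearOrder

theorem dvd_finrank_of_dvd_finrank_homogeneousVectors [Finite ι] [Finite τ]
    [IsFractionRing (MvPolynomial τ Ω) Ψ] {P : Submodule Ψ (ι → Ψ)}
    (hP : ∀ v ∈ polynomialVectors Ω τ P, ∀ j,
      (fun i => homogeneousComponent j (v i)) ∈ polynomialVectors Ω τ P) {q : ℕ}
    (h : ∀ j, q ∣ Module.finrank Ω (homogeneousVectors Ω τ P j)) :
    q ∣ Module.finrank Ψ P := by
  classical
  let := Fintype.ofFinite ι
  let := linearOrderOfSTO (WellOrderingRel (α := ι))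
  let := linearOrderOfSTO (WellOrderingRel (α := τ))
  let m : MonomialOrder τ := .lex
  rw [finrank_eq_ncard_leadingPositions Function.injective_id P,
    leadingPositions_id_eq Ω (m := m) hP]
  exact dvd_ncard_nonempty_of_isUpperSet (isUpperSet_leadingExponents Ω m P) fun j => by
    rw [← finrank_homogeneousVectors]
    exact h j

end GradedRank

noncomputable section SemilinearSubstitution

open MvPolynomial

variable {k R κ μ ν : Type*} [CommRing k] [CommRing R] [Algebra k R]
  [Fintype κ] [Fintype μ]

/-- The ring homomorphism of polynomial rings which acts on scalars by `s` and sends the variable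
`X j` to the linear form whose coefficients are the `j`-th column of `A`. -/
def semilinearSubst (s : R →ₐ[k] R) (A : Matrix κ ν R) :
    MvPolynomial ν R →ₐ[k] MvPolynomial κ R :=
  ((aeval fun j => ∑ i, A i j • (X i : MvPolynomial κ R)).restrictScalars k).comp (mapAlgHom s)

@[simp]
theorem semilinearSubst_X (s : R →ₐ[k] R) (A : Matrix κ ν R) (j : ν) :
    semilinearSubst s A (X j) = ∑ i, A i j • X i := by
  simp [semilinearSubst]

@[simp]
theorem semilinearSubst_C (s : R →ₐ[k] R) (A : Matrix κ ν R) (a : R) :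
    semilinearSubst s A (C a) = C (s a) := by
  simp [semilinearSubst, algebraMap_eq]

theorem semilinearSubst_smul (s : R →ₐ[k] R) (A : Matrix κ ν R) (a : R) (p : MvPolynomial ν R) :
    semilinearSubst s A (a • p) = s a • semilinearSubst s A p := by
  simp [smul_eq_C_mul]

theorem semilinearSubst_monomial (s : R →ₐ[k] R) (A : Matrix κ ν R) (d : ν →₀ ℕ) (a : R) :
    semilinearSubst s A (monomial d a) =
      C (s a) * d.prod fun j n => (∑ i, A i j • X i : MvPolynomial κ R) ^ n := by
  rw [semilinearSubst, AlgHom.comp_apply, mapAlgHom_apply, map_monomial]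
  simp only [AlgHom.restrictScalars_apply, aeval_monomial, algebraMap_eq, RingHom.coe_coe]

theorem semilinearSubst_semilinearSubst (s t : R →ₐ[k] R) (A : Matrix κ μ R) (B : Matrix μ ν R)
    (p : MvPolynomial ν R) :
    semilinearSubst s A (semilinearSubst t B p) = semilinearSubst (s.comp t) (A * B.map s) p := by
  suffices h : ((semilinearSubst s A).comp (semilinearSubst t B)).toRingHom =
      (semilinearSubst (s.comp t) (A * B.map s)).toRingHom from
    DFunLike.congr_fun h p
  refine ringHom_ext (fun a => by simp) fun j => ?_
  simp only [AlgHom.toRingHom_eq_coe, RingHom.coe_coe, AlgHom.comp_apply, semilinearSubst_X,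
    map_sum, semilinearSubst_smul, Finset.smul_sum, smul_smul, Matrix.mul_apply, Matrix.map_apply,
    Finset.sum_smul]
  rw [Finset.sum_comm]
  simp only [mul_comm]

theorem semilinearSubst_one [DecidableEq κ] :
    semilinearSubst (AlgHom.id k R) (1 : Matrix κ κ R) = AlgHom.id k _ := by
  refine AlgHom.coe_ringHom_injective (ringHom_ext (fun a => by simp) fun j => ?_)
  simp [Matrix.one_apply, ite_smul]

theorem isWeightedHomogeneous_semilinearSubst {M : Type*} [AddCommMonoid M] (s : R →ₐ[k] R)
    {A : Matrix κ ν R} {w : κ → M} {w' : ν → M} (hA : ∀ i j, A i j ≠ 0 → w i = w' j)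
    {p : MvPolynomial ν R} {l : M} (hp : IsWeightedHomogeneous w' p l) :
    IsWeightedHomogeneous w (semilinearSubst s A p) l := by
  rw [← support_sum_monomial_coeff p, map_sum]
  refine IsWeightedHomogeneous.sum _ _ _ fun d hd => ?_
  have hlin (j : ν) : IsWeightedHomogeneous w (∑ i, A i j • (X i : MvPolynomial κ R)) (w' j) := by
    refine IsWeightedHomogeneous.sum _ _ _ fun i _ => ?_
    by_cases h : A i j = 0
    · simpa [h] using isWeightedHomogeneous_zero R w _
    · rw [← hA i j h, ← zero_add (w i), smul_eq_C_mul]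
      exact (isWeightedHomogeneous_C _ _).mul (isWeightedHomogeneous_X _ _ _)
  rw [semilinearSubst_monomial, ← hp (mem_support_iff.1 hd), ← zero_add (Finsupp.weight _ _)]
  exact (isWeightedHomogeneous_C _ _).mul
    (IsWeightedHomogeneous.prod _ _ _ fun j _ => (hlin j).pow _)

theorem semilinearSubst_mul_character {M : Type*} [AddCommMonoid M]
    (s : R →ₐ[k] R) (A : Matrix κ ν R) (χ : Multiplicative M →* R) {w : ν → M}
    {p : MvPolynomial ν R} {l : M} (hp : IsWeightedHomogeneous w p l) :
    semilinearSubst s (Matrix.of fun i j => A i j * χ (.ofAdd (w j))) p =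
      χ (.ofAdd l) • semilinearSubst s A p := by
  rw [← support_sum_monomial_coeff p, map_sum, map_sum, Finset.smul_sum]
  refine Finset.sum_congr rfl fun d hd => ?_
  have hlin (j : ν) : ∑ i, (A i j * χ (.ofAdd (w j))) • (X i : MvPolynomial κ R) =
      C (χ (.ofAdd (w j))) * ∑ i, A i j • X i := by
    rw [← smul_eq_C_mul, Finset.smul_sum]
    simp only [smul_smul, mul_comm]
  have hweight : d.prod (fun j n => χ (.ofAdd (w j)) ^ n) = χ (.ofAdd l) := by
    rw [← hp (mem_support_iff.1 hd), Finsupp.weight_apply, Finsupp.sum, ofAdd_sum, map_prod]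
    simp only [ofAdd_nsmul, map_pow, Finsupp.prod]
  rw [semilinearSubst_monomial, semilinearSubst_monomial]
  simp only [Matrix.of_apply, hlin, mul_pow, Finsupp.prod_mul, ← C_pow]
  rw [← hweight, smul_eq_C_mul, map_finsuppProd, mul_left_comm]

theorem semilinearSubst_smul_matrix (s : R →ₐ[k] R) (A : Matrix κ ν R) (a : R) {n : ℕ}
    {p : MvPolynomial ν R} (hp : p.IsHomogeneous n) :
    semilinearSubst s (a • A) p = a ^ n • semilinearSubst s A p := by
  have hA : a • A = Matrix.of fun i j => A i j * powersHom R a (.ofAdd ((1 : ν → ℕ) j)) := by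
    ext
    simp [mul_comm a]
  rw [hA]
  exact (semilinearSubst_mul_character s A (powersHom R a) hp).trans (by simp)

end SemilinearSubstitution

noncomputable section ProjectiveRepresentations

open MvPolynomial

variable {k Ω G : Type*} [CommRing k] [Field Ω] [Algebra k Ω] [Group G]

/-- There is a projective semilinear representation of `G` of degree `d` whose multiplier is the
`t`-th power of `c`. The action of `G` on scalars is given by `s`. -/
def HasRep (s : G →* (Ω ≃ₐ[k] Ω)) (c : G → G → Ωˣ) (t : ℤ) (d : ℕ) : Prop :=
  ∃ A : G → Matrix (Fin d) (Fin d) Ω, A 1 = 1 ∧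
    ∀ σ τ, A σ * (A τ).map (s σ) = c σ τ ^ t • A (σ * τ)

variable {s : G →* (Ω ≃ₐ[k] Ω)} {c : G → G → Ωˣ} {t t' : ℤ} {d e : ℕ}

theorem HasRep.of_submodule {W : Type*} [AddCommGroup W] [Module Ω W] (V : Submodule Ω W)
    [FiniteDimensional Ω V] (T : G → W →+ W) (hV : ∀ σ, ∀ v ∈ V, T σ v ∈ V)
    (hsmul : ∀ σ (a : Ω), ∀ v ∈ V, T σ (a • v) = s σ a • T σ v) (hone : ∀ v ∈ V, T 1 v = v)
    (hmul : ∀ σ τ, ∀ v ∈ V, T σ (T τ v) = c σ τ ^ t • T (σ * τ) v) :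
    HasRep s c t (Module.finrank Ω V) := by
  let b := Module.finBasis Ω V
  let T' σ (v : V) : V := ⟨T σ v, hV σ v v.2⟩
  refine ⟨fun σ => Matrix.of fun i j => b.repr (T' σ (b j)) i, ?_, fun σ τ => ?_⟩
  · ext i j
    simp [T', hone, Matrix.one_apply, Finsupp.single_apply, eq_comm]
  · ext i j
    have hexpand : T' σ (T' τ (b j)) = ∑ l, s σ (b.repr (T' τ (b j)) l) • T' σ (b l) := by
      have h := congrArg (fun v : V => T σ v) (b.sum_repr (T' τ (b j))).symm
      simp only [Submodule.coe_sum, Submodule.coe_smul, map_sum, hsmul _ _ _ (b _).2] at h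
      exact Subtype.ext (by simpa only [Submodule.coe_sum, Submodule.coe_smul] using h)
    have hcomp : T' σ (T' τ (b j)) = (c σ τ ^ t) • T' (σ * τ) (b j) :=
      Subtype.ext (hmul σ τ (b j) (b j).2)
    have hcoord := congrArg (fun v => b.repr v i) (hexpand.symm.trans hcomp)
    simp only [Units.smul_def, map_sum, map_smul, Finsupp.coe_finsetSum, Finset.sum_apply,
      Finsupp.smul_apply, smul_eq_mul] at hcoord
    simp only [Units.smul_def, Matrix.mul_apply, Matrix.of_apply, Matrix.map_apply,
      Matrix.smul_apply, smul_eq_mul, ← hcoord]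
    exact Finset.sum_congr rfl fun _ _ => mul_comm _ _

theorem HasRep.zero : HasRep s c 0 1 :=
  ⟨fun _ => 1, rfl, fun σ τ => by simp⟩

open Matrix in
theorem HasRep.add (h : HasRep s c t d) (h' : HasRep s c t' e) : HasRep s c (t + t') (d * e) := by
  obtain ⟨A, hA1, hA⟩ := h
  obtain ⟨B, hB1, hB⟩ := h'
  refine ⟨fun σ => reindex finProdFinEquiv finProdFinEquiv (kroneckerMap (· * ·) (A σ) (B σ)),
    by simp [hA1, hB1], fun σ τ => ?_⟩
  have hmap : (kroneckerMap (· * ·) (A τ) (B τ)).map (s σ) =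
      kroneckerMap (· * ·) ((A τ).map (s σ)) ((B τ).map (s σ)) := by
    ext
    simp
  have hmul : kroneckerMap (· * ·) (A σ) (B σ) * (kroneckerMap (· * ·) (A τ) (B τ)).map (s σ) =
      c σ τ ^ (t + t') • kroneckerMap (· * ·) (A (σ * τ)) (B (σ * τ)) := by
    rw [hmap, ← mul_kronecker_mul, hA, hB, _root_.zpow_add]
    ext
    simp only [kroneckerMap_apply, Matrix.smul_apply, Units.smul_def, smul_eq_mul, Units.val_mul]
    ring
  have hreindex := congrArg (reindex finProdFinEquiv finProdFinEquiv) hmul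
  rwa [reindex_apply, ← submatrix_mul_equiv _ _ _ finProdFinEquiv.symm] at hreindex

theorem HasRep.neg (h : HasRep s c t d) : HasRep s c (-t) d := by
  obtain ⟨A, hA1, hA⟩ := h
  have hdet (σ : G) : IsUnit (A σ).det := by
    refine Matrix.isUnit_det_of_right_inverse (B := (c σ σ⁻¹ ^ t)⁻¹ • (A σ⁻¹).map (s σ)) ?_
    rw [Matrix.mul_smul, hA, mul_inv_cancel, hA1, inv_smul_smul]
  refine ⟨fun σ => (A σ)⁻¹.transpose, by simp [hA1], fun σ τ => ?_⟩
  have hleft : (A τ)⁻¹.map (s σ) * (A σ)⁻¹ * (A σ * (A τ).map (s σ)) = 1 := by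
    rw [Matrix.mul_assoc, Matrix.nonsing_inv_mul_cancel_left _ _ (hdet σ), ← Matrix.map_mul,
      Matrix.nonsing_inv_mul _ (hdet τ), Matrix.map_one _ (map_zero _) (map_one _)]
  rw [hA, Matrix.mul_smul, ← Matrix.smul_mul] at hleft
  rw [Matrix.transpose_map, ← Matrix.transpose_mul, ← Matrix.transpose_smul,
    Matrix.inv_eq_left_inv hleft, smul_smul, ← zpow_add, neg_add_cancel, zpow_zero, one_smul]

theorem HasRep.nsmul_pow (h : HasRep s c t d) (m : ℕ) : HasRep s c (m * t) (d ^ m) := by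
  induction m with
  | zero => simpa using HasRep.zero
  | succ m ih => simpa [pow_succ, add_mul] using ih.add h

instance (d m : ℕ) : FiniteDimensional Ω (homogeneousSubmodule (Fin d) Ω m) := by
  have : Finite {x : Fin d →₀ ℕ | x.degree = m} := Finsupp.finite_of_degree_eq m
  rw [homogeneousSubmodule_eq_finsupp_supported]
  exact Module.Finite.equiv (AddMonoidAlgebra.supportedEquivFinsupp (R := Ω) (S := Ω) _).symm

theorem finrank_homogeneousSubmodule_fin (d m : ℕ) :
    Module.finrank Ω (homogeneousSubmodule (Fin d) Ω m) = Nat.multichoose d m := by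
  have hfin : {x : Fin d →₀ ℕ | x.degree = m} =
      ((Finset.univ : Finset (Fin d)).finsuppAntidiag m : Set (Fin d →₀ ℕ)) := by
    ext x
    simp [Finset.mem_finsuppAntidiag, Finsupp.degree_eq_sum]
  have : Fintype {x : Fin d →₀ ℕ | x.degree = m} :=
    @Fintype.ofFinite _ (Finsupp.finite_of_degree_eq m)
  rw [homogeneousSubmodule_eq_finsupp_supported,
    (AddMonoidAlgebra.supportedEquivFinsupp (R := Ω) (S := Ω) _).finrank_eq,
    Module.finrank_finsupp_self, ← Nat.card_eq_fintype_card, hfin, Nat.card_coe_set_eq,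
    Set.ncard_coe_finset, Finset.card_finsuppAntidiag_nat_eq_multichoose, Finset.card_fin]

theorem HasRep.sym (h : HasRep s c t d) (m : ℕ) :
    HasRep s c (m * t) (Nat.multichoose d m) := by
  obtain ⟨A, hA1, hA⟩ := h
  let T (σ : G) := semilinearSubst (s σ : Ω →ₐ[k] Ω) (A σ)
  have hmem (σ : G) : ∀ p ∈ homogeneousSubmodule (Fin d) Ω m,
      T σ p ∈ homogeneousSubmodule (Fin d) Ω m := fun p hp =>
    isWeightedHomogeneous_semilinearSubst (s σ : Ω →ₐ[k] Ω) (fun _ _ _ => rfl) hp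
  have hsmul (σ : G) (a : Ω) (p) : T σ (a • p) = s σ a • T σ p := semilinearSubst_smul _ _ a p
  have hone (p) : T 1 p = p := by
    have hs : ((s 1 : Ω ≃ₐ[k] Ω) : Ω →ₐ[k] Ω) = AlgHom.id k Ω := by
      rw [map_one]
      rfl
    simp only [T, hA1, hs, semilinearSubst_one, AlgHom.id_apply]
  have hmul (σ τ : G) (p) (hp : p ∈ homogeneousSubmodule (Fin d) Ω m) :
      T σ (T τ p) = c σ τ ^ (m * t) • T (σ * τ) p := by
    have hs : ((s σ : Ω ≃ₐ[k] Ω) : Ω →ₐ[k] Ω).comp (s τ : Ω →ₐ[k] Ω) =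
        (s (σ * τ) : Ω ≃ₐ[k] Ω) := by
      rw [map_mul]
      rfl
    have hA' : A σ * (A τ).map (s σ : Ω →ₐ[k] Ω) = ((c σ τ ^ t : Ωˣ) : Ω) • A (σ * τ) := hA σ τ
    rw [semilinearSubst_semilinearSubst, hs, hA', semilinearSubst_smul_matrix _ _ _ hp,
      Units.smul_def, mul_comm, zpow_mul, zpow_natCast, Units.val_pow_eq_pow_val]
  rw [← finrank_homogeneousSubmodule_fin (Ω := Ω)]
  exact HasRep.of_submodule (homogeneousSubmodule (Fin d) Ω m)
    (fun σ => AddMonoidHomClass.toAddMonoidHom (T σ)) hmem (fun σ a p _ => hsmul σ a p)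
    (fun p _ => hone p) hmul

/-- The recursion `(m + 1) h_{m+1} = ∑ h_{m-k} p_{k+1}` between complete homogeneous and power
sums, evaluated at `d` variables equal to one. -/
theorem mul_sum_multichoose (d m : ℕ) :
    d * ∑ k ∈ Finset.range (m + 1), Nat.multichoose d k = (m + 1) * Nat.multichoose d (m + 1) := by
  have h := Nat.choose_succ_right_eq (d + m) m
  rw [Nat.add_sub_cancel] at h
  rw [Nat.sum_range_multichoose, Nat.multichoose_eq, Nat.add_succ_sub_one, mul_comm,
    mul_comm (m + 1), h, add_comm m d, Nat.choose_symm_add]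

theorem HasRep.dvd_mul_of_mul_add_eq_one {n : ℕ} (hn : ∀ d, HasRep s c 1 d → n ∣ d)
    (h : HasRep s c t d) (m : ℕ) (hf : HasRep s c t' e) (ht : t * (m + 1) + t' = 1) :
    n ∣ d * e := by
  induction m using Nat.strong_induction_on generalizing t' e with
  | _ m ih =>
    have hsum := mul_sum_multichoose d m
    rw [Finset.sum_range_succ', Nat.multichoose_zero_right, mul_add, mul_one] at hsum
    have hlower : n ∣ (d * ∑ k ∈ Finset.range m, d.multichoose (k + 1)) * e := by
      rw [Finset.mul_sum, Finset.sum_mul]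
      refine Finset.dvd_sum fun k hk => ?_
      have hk := Finset.mem_range.1 hk
      rw [mul_assoc]
      refine ih (m - (k + 1)) (by lia) ((h.sym (k + 1)).add hf) ?_
      rw [Nat.cast_sub hk]
      push_cast
      linarith
    have htop : n ∣ ((m + 1) * d.multichoose (m + 1)) * e := by
      have hrep := (h.sym (m + 1)).add hf
      rw [show ((m + 1 : ℕ) : ℤ) * t + t' = 1 by push_cast; linarith] at hrep
      rw [mul_assoc]
      exact (hn _ hrep).mul_left _
    rw [← hsum, add_mul] at htop
    exact (Nat.dvd_add_right hlower).1 htop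

theorem not_dvd_multichoose_prime_pow {p : ℕ} (hp : p.Prime) (v : ℕ) {u : ℕ} (hu : ¬p ∣ u) :
    ¬p ∣ Nat.multichoose (p ^ v * u) (p ^ v) := by
  have := Fact.mk hp
  have hq : 0 < p ^ v := pow_pos hp.pos _
  have hdiv : (p ^ v * u + p ^ v - 1) / p ^ v = u := by
    rw [Nat.add_sub_assoc hq, Nat.mul_add_div hq, Nat.div_eq_of_lt (by lia), add_zero]
  have hprod : ∏ i ∈ Finset.range v,
      ((p ^ v * u + p ^ v - 1) / p ^ i % p).choose (p ^ v / p ^ i % p) = 1 := by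
    refine Finset.prod_eq_one fun i hi => ?_
    have hi := Finset.mem_range.1 hi
    rw [Nat.pow_div hi.le hp.pos, Nat.mod_eq_zero_of_dvd (dvd_pow_self _ (by lia)),
      Nat.choose_zero_right]
  have hlucas := Choose.choose_modEq_choose_mul_prod_range_choose (p := p)
    (n := p ^ v * u + p ^ v - 1) (k := p ^ v) v
  rw [hdiv, Nat.div_self hq, Nat.choose_one_right, hprod, Nat.cast_one, mul_one,
    Int.natCast_modEq_iff] at hlucas
  rwa [Nat.multichoose_eq, hlucas.dvd_iff dvd_rfl]

theorem exists_mul_eq_mul_add_one {T q : ℕ} (h : T.Coprime q) (hq : q ≠ 0) :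
    ∃ m l : ℕ, l * q = T * (m + 1) + 1 := by
  have := NeZero.mk hq
  let m := (-(T : ZMod q)⁻¹).val + (q - 1)
  have hm : ((T * (m + 1) + 1 : ℕ) : ZMod q) = 0 := by
    have : m + 1 = (-(T : ZMod q)⁻¹).val + q := by lia
    simp [this, ZMod.coe_mul_inv_eq_one T h]
  obtain ⟨l, hl⟩ := (ZMod.natCast_eq_zero_iff _ _).1 hm
  exact ⟨m, l, by rw [hl, mul_comm]⟩

theorem HasRep.prime_pow_dvd {n : ℕ} (hrep : HasRep s c 1 n)
    (hn : ∀ d, HasRep s c 1 d → n ∣ d) {p : ℕ} (hp : p.Prime)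
    (hpt : ¬(p : ℤ) ∣ t) (h : HasRep s c t d) : p ^ n.factorization p ∣ d := by
  obtain rfl | hn0 := eq_or_ne n 0
  · simp
  wlog ht : t ≤ 0 generalizing t
  · exact this (by rwa [dvd_neg]) h.neg (by lia)
  obtain ⟨T, rfl⟩ : ∃ T : ℕ, t = -T := ⟨t.natAbs, by lia⟩
  set q := p ^ n.factorization p with hq
  obtain ⟨u, hu⟩ : q ∣ n := Nat.ordProj_dvd n p
  have hpu : ¬p ∣ u := by
    have h := Nat.not_dvd_ordCompl hp hn0
    rwa [← hq, hu, Nat.mul_div_cancel_left _ (pow_pos hp.pos _)] at h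
  have hTq : T.Coprime q := by
    rw [dvd_neg, Int.natCast_dvd_natCast] at hpt
    exact ((hp.coprime_iff_not_dvd.2 hpt).pow_left _).symm
  obtain ⟨m, l, hml⟩ := exists_mul_eq_mul_add_one hTq (pow_pos hp.pos _).ne'
  have hdvd := h.dvd_mul_of_mul_add_eq_one hn m ((hrep.sym q).nsmul_pow l) (by
    have hml : (l * q : ℤ) = T * (m + 1) + 1 := by exact_mod_cast hml
    linear_combination hml)
  refine Nat.Coprime.dvd_of_dvd_mul_right (Nat.Coprime.pow _ l ?_)
    ((Dvd.intro u hu.symm).trans hdvd)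
  rw [hp.coprime_iff_not_dvd, hu]
  exact not_dvd_multichoose_prime_pow hp _ hpu

end ProjectiveRepresentations

noncomputable section GaloisDescent

variable {K L V : Type*} [Field K] [Field L] [Algebra K L] [AddCommGroup V] [Module L V]
  [Module K V] [IsScalarTower K L V]

/-- The `K`-subspace of vectors fixed by a semilinear action `T` of the Galois group of `L/K`. -/
def fixedVectors (T : Gal(L/K) →* AddMonoid.End V)
    (hT : ∀ σ (a : L) v, T σ (a • v) = σ a • T σ v) : Submodule K V where
  carrier := {v | ∀ σ, T σ v = v}
  add_mem' ha hb σ := by rw [map_add, ha σ, hb σ]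
  zero_mem' _ := map_zero _
  smul_mem' a v hv σ := by rw [← algebraMap_smul L a v, hT, hv σ, AlgEquiv.commutes]

variable [FiniteDimensional K L] {T : Gal(L/K) →* AddMonoid.End V}
  {hT : ∀ σ (a : L) v, T σ (a • v) = σ a • T σ v}

theorem sum_apply_mem_fixedVectors (v : V) : ∑ σ, T σ v ∈ fixedVectors T hT := by
  intro τ
  rw [map_sum]
  exact Fintype.sum_equiv (Equiv.mulLeft τ) _ _ fun σ => by simp [map_mul]

variable (hT) in
theorem linearIndependent_fixedVectors [IsGalois K L] {ι : Type*} {b : ι → fixedVectors T hT}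
    (hb : LinearIndependent K b) : LinearIndependent L fun i => (b i : V) := by
  classical
  rw [linearIndependent_iff'] at hb ⊢
  intro I a ha i hi
  have htrace (x : L) : ∑ i ∈ I, Algebra.trace K L (x * a i) • b i = 0 := by
    refine Subtype.ext ?_
    have hsum : ∑ σ, T σ (x • ∑ i ∈ I, a i • (b i : V)) = 0 := by simp [ha]
    simp only [Finset.smul_sum, smul_smul, map_sum, hT, fun σ i => (b i).2 σ] at hsum
    rw [Finset.sum_comm] at hsum
    simpa only [Submodule.coe_sum, Submodule.coe_smul, Submodule.coe_zero, ← Finset.sum_smul,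
      ← trace_eq_sum_automorphisms, algebraMap_smul] using hsum
  exact (traceForm_nondegenerate K L).2 (a i) fun x => hb I _ (htrace x) i hi

variable (hT) in
theorem span_fixedVectors : Submodule.span L (fixedVectors T hT : Set V) = ⊤ := by
  by_contra hspan
  obtain ⟨f, hf0, hf⟩ := Submodule.exists_le_ker_of_lt_top _ (lt_top_iff_ne_top.2 hspan)
  refine hf0 (LinearMap.ext fun v => ?_)
  have hindep : LinearIndependent L fun σ : Gal(L/K) => (σ : L → L) :=
    (linearIndependent_monoidHom L L).comp (fun σ : Gal(L/K) => ((σ : L →+* L) : L →* L))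
      fun σ τ h => AlgEquiv.ext fun x => DFunLike.congr_fun (F := L →* L) h x
  have hzero : ∑ σ : Gal(L/K), f (T σ v) • (σ : L → L) = 0 := by
    ext x
    have h := hf (Submodule.subset_span (sum_apply_mem_fixedVectors (hT := hT) (x • v)))
    simpa [hT, mul_comm] using h
  simpa using Fintype.linearIndependent_iff.1 hindep (fun σ => f (T σ v)) hzero 1

variable (hT) in
theorem finrank_fixedVectors [IsGalois K L] :
    Module.finrank K (fixedVectors T hT) = Module.finrank L V := by
  let b := Module.Free.chooseBasis K (fixedVectors T hT)
  have hspan : ⊤ ≤ Submodule.span L (Set.range fun i => (b i : V)) := by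
    rw [← span_fixedVectors hT, Submodule.span_le]
    intro v hv
    have h : _ = v := congrArg Subtype.val (b.linearCombination_repr ⟨v, hv⟩)
    rw [Finsupp.linearCombination_apply, Finsupp.sum, Submodule.coe_sum] at h
    rw [SetLike.mem_coe, ← h]
    refine Submodule.sum_mem _ fun i _ => ?_
    rw [Submodule.coe_smul, ← algebraMap_smul L]
    exact Submodule.smul_mem _ _ (Submodule.subset_span ⟨i, rfl⟩)
  rw [Module.finrank_eq_nat_card_basis b, Module.finrank_eq_nat_card_basis
    (Module.Basis.mk (linearIndependent_fixedVectors hT b.linearIndependent) hspan)]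

end GaloisDescent

section DivisionAlgebraAction

variable {K D W : Type*} [Field K] [DivisionRing D] [Algebra K D] [AddCommGroup W] [Module K W]

theorem finrank_dvd_of_algHom_end (f : D →ₐ[K] Module.End K W) (V : Submodule K W)
    (hV : ∀ x, ∀ w ∈ V, f x w ∈ V) : Module.finrank K D ∣ Module.finrank K V := by
  let : Module D W := Module.compHom W (f : D →+* Module.End K W)
  have hsmul (x : D) (w : W) : x • w = f x w := rfl
  let V' : Submodule D W := { V with smul_mem' := fun x w hw => hV x w hw }
  have : IsScalarTower K D W := ⟨fun a x w => by simp [hsmul]⟩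
  exact ⟨_, (Module.finrank_mul_finrank K D V').symm⟩

end DivisionAlgebraAction

section CentralBaseChange

open scoped TensorProduct
open TensorProduct

variable {K L D : Type*} [Field K] [Field L] [Algebra K L]

theorem exists_eq_tmul_one_of_commute {A : Type*} [Ring A] [Algebra K A] [Algebra.IsCentral K A]
    {x : L ⊗[K] A} (hx : ∀ y : A, Commute (1 ⊗ₜ y) x) : ∃ l : L, x = l ⊗ₜ 1 := by
  have hmem : x ∈ Subalgebra.centralizer K
      (Algebra.TensorProduct.includeRight : A →ₐ[K] L ⊗[K] A).range := by
    rw [Subalgebra.mem_centralizer_iff]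
    rintro _ ⟨y, rfl⟩
    exact hx y
  rw [Subalgebra.centralizer_range_includeRight_eq_center_tensorProduct] at hmem
  obtain ⟨z, rfl⟩ := hmem
  clear hx
  induction z with
  | zero => exact ⟨0, by simp⟩
  | add z w hz hw =>
    obtain ⟨l, hl⟩ := hz
    obtain ⟨m, hm⟩ := hw
    exact ⟨l + m, by simpa [TensorProduct.add_tmul] using congrArg₂ (· + ·) hl hm⟩
  | tmul l a =>
    obtain ⟨r, hr⟩ := Algebra.IsCentral.out (K := K) a.2
    exact ⟨r • l, by simp [← hr, Algebra.algebraMap_eq_smul_one, TensorProduct.smul_tmul]⟩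

variable [DivisionRing D] [Algebra K D]

theorem equivFinsuppOfBasisLeft_one_tmul_mul {ι : Type*} [DecidableEq ι] (e : Module.Basis ι K L)
    (y : D) (x : L ⊗[K] D) (i : ι) :
    equivFinsuppOfBasisLeft e ((1 ⊗ₜ y) * x) i = y * equivFinsuppOfBasisLeft e x i := by
  induction x with
  | zero => simp
  | tmul a b => simp
  | add a b ha hb => simp only [mul_add, map_add, Finsupp.add_apply, ha, hb]

theorem equivFinsuppOfBasisLeft_mul_one_tmul {ι : Type*} [DecidableEq ι] (e : Module.Basis ι K L)
    (y : D) (x : L ⊗[K] D) (i : ι) :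
    equivFinsuppOfBasisLeft e (x * (1 ⊗ₜ y)) i = equivFinsuppOfBasisLeft e x i * y := by
  induction x with
  | zero => simp
  | tmul a b => simp
  | add a b ha hb => simp only [add_mul, map_add, Finsupp.add_apply, ha, hb]

-- A nonzero element of the ideal with fewest coordinates, scaled to have a coordinate `1`,
-- commutes with `D`, since each commutator has fewer coordinates.
theorem exists_commute_mem_twoSidedIdeal {I : TwoSidedIdeal (L ⊗[K] D)} (hI : I ≠ ⊥) :
    ∃ z ∈ I, z ≠ 0 ∧ ∀ y : D, Commute (1 ⊗ₜ y) z := by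
  classical
  let e := Module.Basis.ofVectorSpace K L
  let Φ := equivFinsuppOfBasisLeft (N := D) e
  obtain ⟨x, ⟨hxI, hx0⟩, hmin⟩ := exists_minimalFor_of_wellFoundedLT
    (fun x => x ∈ I ∧ x ≠ 0) (fun x => (Φ x).support.card) (by
      by_contra! h
      exact hI (eq_bot_iff.2 fun x hx => h x hx))
  obtain ⟨i, hi⟩ : ∃ i, Φ x i ≠ 0 :=
    Finsupp.ne_iff.1 ((map_ne_zero_iff Φ Φ.injective).2 hx0)
  let z := 1 ⊗ₜ (Φ x i)⁻¹ * x
  have hzI : z ∈ I := I.mul_mem_left _ _ hxI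
  have hz (j) : Φ z j = (Φ x i)⁻¹ * Φ x j := equivFinsuppOfBasisLeft_one_tmul_mul e _ _ _
  have hzi : Φ z i = 1 := by rw [hz, inv_mul_cancel₀ hi]
  refine ⟨z, hzI, fun h => by simp [h] at hzi, fun y => ?_⟩
  have hcomm (j) : Φ (1 ⊗ₜ y * z - z * 1 ⊗ₜ y) j = y * Φ z j - Φ z j * y := by
    rw [map_sub, Finsupp.sub_apply, equivFinsuppOfBasisLeft_one_tmul_mul,
      equivFinsuppOfBasisLeft_mul_one_tmul]
  have hsupp : (Φ (1 ⊗ₜ y * z - z * 1 ⊗ₜ y)).support ⊂ (Φ x).support := by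
    refine Finset.ssubset_iff_subset_ne.2 ⟨fun j hj => ?_, fun h => ?_⟩
    · rw [Finsupp.mem_support_iff, hcomm, hz] at hj
      exact Finsupp.mem_support_iff.2 fun h => hj (by simp [h])
    · rw [← Finsupp.mem_support_iff, ← h, Finsupp.mem_support_iff, hcomm, hzi] at hi
      simp at hi
  by_contra hne
  have hmem := I.sub_mem (I.mul_mem_left (1 ⊗ₜ y) z hzI) (I.mul_mem_right z (1 ⊗ₜ y) hzI)
  exact (hmin ⟨hmem, sub_ne_zero.2 hne⟩ (Finset.card_lt_card hsupp).le).not_gt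
    (Finset.card_lt_card hsupp)

instance isSimpleRing_tensorProduct [Algebra.IsCentral K D] : IsSimpleRing (L ⊗[K] D) := by
  refine IsSimpleRing.of_eq_bot_or_eq_top fun I => or_iff_not_imp_left.2 fun hI => ?_
  obtain ⟨z, hzI, hz0, hz⟩ := exists_commute_mem_twoSidedIdeal hI
  obtain ⟨l, rfl⟩ := exists_eq_tmul_one_of_commute hz
  have hl : l ≠ 0 := fun h => hz0 (by rw [h, TensorProduct.zero_tmul])
  rw [← TwoSidedIdeal.one_mem_iff]
  simpa [hl, Algebra.TensorProduct.one_def] using I.mul_mem_left (l⁻¹ ⊗ₜ 1) _ hzI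

theorem bot_eq_top_of_isSepClosed [IsSepClosed K] [FiniteDimensional K D]
    [Algebra.IsCentral K D] : (⊥ : Subalgebra K D) = ⊤ := by
  by_contra hne
  obtain ⟨x, hx, hsep⟩ := JacobsonNoether.exists_separable_and_not_isCentral' hne
  exact hx (minpoly.mem_range_of_degree_eq_one K x (IsSepClosed.degree_eq_one_of_irreducible K
    (minpoly.irreducible (Algebra.IsIntegral.isIntegral x)) hsep))

instance isCentral_tensorProduct [Algebra.IsCentral K D] : Algebra.IsCentral L (L ⊗[K] D) where
  out x hx := by
    obtain ⟨l, rfl⟩ := exists_eq_tmul_one_of_commute fun y =>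
      Subalgebra.mem_center_iff.1 hx (1 ⊗ₜ y)
    exact ⟨l, rfl⟩

theorem isCentral_of_matrix (n : ℕ) [NeZero n] [Algebra.IsCentral K (Matrix (Fin n) (Fin n) D)] :
    Algebra.IsCentral K D where
  out x hx := by
    have hcenter : Matrix.scalar (Fin n) x ∈ Subalgebra.center K (Matrix (Fin n) (Fin n) D) :=
      Subalgebra.mem_center_iff.2 fun M =>
        (Matrix.scalar_commute x (fun y => (Subalgebra.mem_center_iff.1 hx y).symm) M).symm
    obtain ⟨a, ha⟩ := Algebra.IsCentral.out (K := K) hcenter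
    exact ⟨a, by simpa [Matrix.algebraMap_matrix_apply] using congrFun (congrFun ha 0) 0⟩

variable (K L D) in
theorem exists_algEquiv_matrix_of_isSepClosed [IsSepClosed L] [FiniteDimensional K D]
    [Algebra.IsCentral K D] :
    ∃ n : ℕ, n ≠ 0 ∧ Nonempty (L ⊗[K] D ≃ₐ[L] Matrix (Fin n) (Fin n) L) := by
  have : IsArtinianRing (L ⊗[K] D) := IsArtinianRing.of_finite L _
  obtain ⟨n, hn, D', _, _, _, ⟨e⟩⟩ :=
    IsSimpleRing.exists_algEquiv_matrix_divisionRing_finite L (L ⊗[K] D)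
  have : Algebra.IsCentral L (Matrix (Fin n) (Fin n) D') := .of_algEquiv _ _ _ e
  have : Algebra.IsCentral L D' := isCentral_of_matrix n
  let e' : D' ≃ₐ[L] L := Subalgebra.topEquiv.symm.trans
    ((Subalgebra.equivOfEq _ _ bot_eq_top_of_isSepClosed.symm).trans (Algebra.botEquiv L D'))
  exact ⟨n, NeZero.ne n, ⟨e.trans e'.mapMatrix⟩⟩

end CentralBaseChange

noncomputable section GaloisSplitting

open scoped TensorProduct

/-- A splitting of `D` over a field `Ω` with an action `s` of `G`: a matrix representation of `D`
over `Ω`, matrices realizing the isomorphisms with its conjugates, and the factor set they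
satisfy. -/
structure SemilinearSplitting {k Ω G : Type*} [CommRing k] [Field Ω] [Algebra k Ω] [Group G]
    (s : G →* (Ω ≃ₐ[k] Ω)) (D : Type*) [Ring D] [Algebra k D] (n : ℕ) where
  rep : D →ₐ[k] Matrix (Fin n) (Fin n) Ω
  conj : G → GL (Fin n) Ω
  factorSet : G → G → Ωˣ
  conj_one : conj 1 = 1
  conj_mul_rep : ∀ σ x, (conj σ).val * (rep x).map (s σ) = rep x * (conj σ).val
  conj_mul_conj : ∀ σ τ, (conj σ).val * (conj τ).val.map (s σ) =
    factorSet σ τ • (conj (σ * τ)).val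

namespace SemilinearSplitting

variable {k Ω G D : Type*} [CommRing k] [Field Ω] [Algebra k Ω] [Group G] {s : G →* (Ω ≃ₐ[k] Ω)}
  [Ring D] [Algebra k D] {n : ℕ}

theorem hasRep (S : SemilinearSplitting s D n) : HasRep s S.factorSet 1 n :=
  ⟨fun σ => S.conj σ, by simp [S.conj_one], fun σ τ => by
    rw [zpow_one]
    exact S.conj_mul_conj σ τ⟩

/-- The semilinear action `w ↦ conj σ * σ(w) * (A σ)ᵀ` obtained from a projective representation `A`
with the inverse multiplier. -/
def action (S : SemilinearSplitting s D n) {d : ℕ} {A : G → Matrix (Fin d) (Fin d) Ω}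
    (hA1 : A 1 = 1) (hA : ∀ σ τ, A σ * (A τ).map (s σ) = (S.factorSet σ τ)⁻¹ • A (σ * τ)) :
    G →* AddMonoid.End (Matrix (Fin n) (Fin d) Ω) where
  toFun σ :=
    { toFun w := (S.conj σ).val * w.map (s σ) * (A σ).transpose
      map_zero' := by simp [Matrix.map_zero]
      map_add' v w := by rw [Matrix.map_add _ (map_add (s σ)), Matrix.mul_add, Matrix.add_mul] }
  map_one' := by
    ext1 w
    change (S.conj 1).val * w.map (s 1) * (A 1).transpose = w
    have hmap : w.map (s 1) = w := by ext; simp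
    rw [hmap, S.conj_one, hA1, Units.val_one, Matrix.one_mul, Matrix.transpose_one, Matrix.mul_one]
  map_mul' σ τ := by
    ext1 w
    change (S.conj (σ * τ)).val * w.map (s (σ * τ)) * (A (σ * τ)).transpose =
      (S.conj σ).val * ((S.conj τ).val * w.map (s τ) * (A τ).transpose).map (s σ) *
        (A σ).transpose
    have hmap : (w.map (s τ)).map (s σ) = w.map (s (σ * τ)) := by rw [map_mul]; rfl
    have htranspose := congrArg Matrix.transpose (hA σ τ)
    rw [Matrix.transpose_mul, Matrix.transpose_smul] at htranspose
    rw [Matrix.map_mul, Matrix.map_mul, hmap, ← Matrix.mul_assoc, ← Matrix.mul_assoc,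
      S.conj_mul_conj, Matrix.transpose_map, Matrix.mul_assoc _ _ (A σ).transpose, htranspose]
    simp

/-- The factor set generates a class whose index has the same prime powers as the degree `n`, as is
the case for splittings of division algebras of degree `n`. -/
def HasFullIndex (S : SemilinearSplitting s D n) : Prop :=
  ∀ ⦃p : ℕ⦄, p.Prime → ∀ ⦃t : ℤ⦄, ¬(p : ℤ) ∣ t → ∀ ⦃d : ℕ⦄, HasRep s S.factorSet t d →
    p ^ n.factorization p ∣ d

end SemilinearSplitting

/-- A splitting of `D` over the Galois extension `L/K`. -/
abbrev GaloisSplitting (K L D : Type*) [Field K] [Field L] [Algebra K L] [DivisionRing D]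
    [Algebra K D] (n : ℕ) :=
  SemilinearSplitting (MonoidHom.id Gal(L/K)) D n

variable {K L D : Type*} [Field K] [Field L] [Algebra K L] [DivisionRing D] [Algebra K D] {n : ℕ}

theorem GaloisSplitting.dvd_of_hasRep [FiniteDimensional K L] [IsGalois K L]
    (S : GaloisSplitting K L D n) (hD : Module.finrank K D = n ^ 2) (hn : n ≠ 0) {d : ℕ}
    (h : HasRep (MonoidHom.id Gal(L/K)) S.factorSet 1 d) : n ∣ d := by
  obtain ⟨A, hA1, hA⟩ := h.neg
  let T := S.action hA1 fun σ τ => by simpa using hA σ τ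
  have hT (σ) (a : L) (w) : T σ (a • w) = σ a • T σ w := by
    change (S.conj σ).val * (a • w).map σ * (A σ).transpose = _
    have hmap : (a • w).map σ = σ a • w.map σ := by ext; simp
    rw [hmap, Matrix.mul_smul, Matrix.smul_mul]
    rfl
  let f : D →ₐ[K] Module.End K (Matrix (Fin n) (Fin d) L) :=
    AlgHom.ofLinearMap ((mulLinearMap (R := K)).comp S.rep.toLinearMap)
      (by ext; simp) fun x y => by ext1 w; simp [Matrix.mul_assoc]
  have hstable (x) (w) (hw : w ∈ fixedVectors T hT) : f x w ∈ fixedVectors T hT := fun σ => by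
    have hrep : (S.conj σ).val * (S.rep x).map σ = S.rep x * (S.conj σ).val := S.conj_mul_rep σ x
    have hfix : (S.conj σ).val * w.map σ * (A σ).transpose = w := hw σ
    change (S.conj σ).val * (S.rep x * w).map σ * (A σ).transpose = S.rep x * w
    rw [Matrix.map_mul, ← Matrix.mul_assoc, hrep, Matrix.mul_assoc, Matrix.mul_assoc,
      ← Matrix.mul_assoc (S.conj σ).val, hfix]
  have hdvd := finrank_dvd_of_algHom_end f _ hstable
  rw [finrank_fixedVectors hT, Module.finrank_matrix, hD, pow_two] at hdvd
  simpa using Nat.dvd_of_mul_dvd_mul_left (Nat.pos_of_ne_zero hn) (by simpa using hdvd)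

theorem GaloisSplitting.hasFullIndex [FiniteDimensional K L] [IsGalois K L]
    (S : GaloisSplitting K L D n) (hD : Module.finrank K D = n ^ 2) (hn : n ≠ 0) :
    S.HasFullIndex := fun _ hp _ hpt _ h =>
  S.hasRep.prime_pow_dvd (fun _ => S.dvd_of_hasRep hD hn) hp hpt h

section Existence

variable [FiniteDimensional K D] [Algebra.IsCentral K D]

theorem exists_algEquiv_of_rep (hD : Module.finrank K D = n ^ 2) [NeZero n]
    (ρ : D →ₐ[K] Matrix (Fin n) (Fin n) L) :
    ∃ e : L ⊗[K] D ≃ₐ[L] Matrix (Fin n) (Fin n) L, ∀ x, e (1 ⊗ₜ x) = ρ x := by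
  have hcomm (l : L) (x : D) : Commute (Algebra.ofId L (Matrix (Fin n) (Fin n) L) l) (ρ x) :=
    Algebra.commutes l _
  let f : L ⊗[K] D →ₐ[L] Matrix (Fin n) (Fin n) L :=
    Algebra.TensorProduct.lift (Algebra.ofId L _) ρ hcomm
  have hinj : Function.Injective f := f.toRingHom.injective
  have hdim : Module.finrank L (L ⊗[K] D) = Module.finrank L (Matrix (Fin n) (Fin n) L) := by
    rw [Module.finrank_baseChange, hD, Module.finrank_matrix]
    simp [pow_two]
  have hsurj : Function.Surjective f :=
    (LinearMap.injective_iff_surjective_of_finrank_eq_finrank (f := f.toLinearMap) hdim).1 hinj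
  exact ⟨AlgEquiv.ofBijective f ⟨hinj, hsurj⟩, fun x =>
    (Algebra.TensorProduct.lift_tmul _ _ hcomm 1 x).trans (by rw [map_one, one_mul])⟩

theorem exists_eq_smul_one_of_commute_rep (hD : Module.finrank K D = n ^ 2) [NeZero n]
    (ρ : D →ₐ[K] Matrix (Fin n) (Fin n) L) {M : Matrix (Fin n) (Fin n) L}
    (hM : ∀ x, Commute (ρ x) M) : ∃ a : L, M = a • 1 := by
  obtain ⟨e, he⟩ := exists_algEquiv_of_rep hD ρ
  obtain ⟨l, hl⟩ := exists_eq_tmul_one_of_commute (x := e.symm M) fun y => e.injective <| by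
    rw [map_mul, map_mul, e.apply_symm_apply, he, hM y]
  refine ⟨l, ?_⟩
  rw [← Algebra.algebraMap_eq_smul_one, ← e.commutes, ← e.symm_apply_eq, hl]
  rfl

theorem exists_GL_mul_rep_eq_rep_mul (hD : Module.finrank K D = n ^ 2) [NeZero n]
    (ρ ρ' : D →ₐ[K] Matrix (Fin n) (Fin n) L) :
    ∃ H : GL (Fin n) L, ∀ x, H.val * ρ' x = ρ x * H := by
  obtain ⟨e, he⟩ := exists_algEquiv_of_rep hD ρ
  obtain ⟨e', he'⟩ := exists_algEquiv_of_rep hD ρ'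
  let E : Matrix (Fin n) (Fin n) L ≃ₐ[L] Module.End L (Fin n → L) := Matrix.toLinAlgEquiv'
  obtain ⟨T, hT⟩ := AlgEquiv.eq_linearEquivConjAlgEquiv
    ((E.symm.trans (e'.symm.trans e)).trans E)
  refine ⟨Units.map (E.symm : _ →* _) (LinearMap.GeneralLinearGroup.ofLinearEquiv T),
    fun x => E.injective ?_⟩
  have hconj : E (ρ x) = T.conjAlgEquiv L (E (ρ' x)) := by
    simp [← hT, ← he, ← he']
  rw [map_mul, map_mul, hconj]
  ext v
  simp

theorem exists_unit_smul_of_conj (hD : Module.finrank K D = n ^ 2) [NeZero n]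
    (ρ ρ' : D →ₐ[K] Matrix (Fin n) (Fin n) L) {H H' : GL (Fin n) L}
    (hH : ∀ x, H.val * ρ' x = ρ x * H.val)
    (hH' : ∀ x, H'.val * ρ' x = ρ x * H'.val) :
    ∃ a : Lˣ, H.val = a • H'.val := by
  obtain ⟨a, ha⟩ := exists_eq_smul_one_of_commute_rep hD ρ
    (M := (H * H'⁻¹).val) fun x => by
      have hinv : ρ' x * H'⁻¹.val = H'⁻¹.val * ρ x := by
        rw [Units.mul_inv_eq_iff_eq_mul, mul_assoc, ← hH', Units.inv_mul_cancel_left]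
      rw [commute_iff_eq, Units.val_mul, ← mul_assoc, ← hH, mul_assoc, hinv, mul_assoc]
  have ha0 : a ≠ 0 := by
    rintro rfl
    exact (H * H'⁻¹).ne_zero (by rw [ha, zero_smul])
  refine ⟨Units.mk0 a ha0, ?_⟩
  rw [Units.smul_mk0, ← Matrix.one_mul H'.val, ← Matrix.smul_mul, ← ha,
    Units.val_mul, Units.inv_mul_cancel_right]

theorem exists_galoisSplitting_of_rep (hD : Module.finrank K D = n ^ 2) [NeZero n]
    (ρ : D →ₐ[K] Matrix (Fin n) (Fin n) L) : Nonempty (GaloisSplitting K L D n) := by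
  classical
  let ρ' (σ : Gal(L/K)) : D →ₐ[K] Matrix (Fin n) (Fin n) L := (σ : L →ₐ[K] L).mapMatrix.comp ρ
  choose H₀ hH₀ using fun σ => exists_GL_mul_rep_eq_rep_mul hD ρ (ρ' σ)
  let H := Function.update H₀ 1 1
  have hH (σ x) : (H σ).val * (ρ x).map σ = ρ x * (H σ).val := by
    by_cases h : σ = 1
    · subst h
      simp only [H, Function.update_self, Units.val_one, one_mul, mul_one]
      rfl
    · simp only [H, Function.update_of_ne h]
      exact hH₀ σ x
  have hcomp (σ τ : Gal(L/K)) (x) :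
      (H σ * Matrix.GeneralLinearGroup.map (σ : L →+* L) (H τ)).val * ρ' (σ * τ) x =
        ρ x * (H σ * Matrix.GeneralLinearGroup.map (σ : L →+* L) (H τ)).val := by
    have h : ((H τ).val * (ρ x).map τ).map σ = (ρ x * (H τ).val).map σ :=
      congrArg (fun M => Matrix.map M σ) (hH τ x)
    rw [Matrix.map_mul, Matrix.map_mul] at h
    change (H σ).val * (H τ).val.map σ * ((ρ x).map τ).map σ =
      ρ x * ((H σ).val * (H τ).val.map σ)
    rw [mul_assoc, h, ← mul_assoc, hH, mul_assoc]
  choose c hc using fun σ τ => exists_unit_smul_of_conj hD ρ (ρ' (σ * τ)) (hcomp σ τ) (hH (σ * τ))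
  exact ⟨{ rep := ρ, conj := H, factorSet := c, conj_one := by simp [H], conj_mul_rep := hH
           conj_mul_conj := hc }⟩

variable (K D) in
theorem exists_rep_over_finite_galois : ∃ (n : ℕ) (L : IntermediateField K (SeparableClosure K)),
    n ≠ 0 ∧ Module.finrank K D = n ^ 2 ∧ FiniteDimensional K L ∧ IsGalois K L ∧
      Nonempty (D →ₐ[K] Matrix (Fin n) (Fin n) L) := by
  obtain ⟨n, hn, ⟨e⟩⟩ := exists_algEquiv_matrix_of_isSepClosed K (SeparableClosure K) D
  have hD : Module.finrank K D = n ^ 2 := by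
    have h := e.toLinearEquiv.finrank_eq
    rw [Module.finrank_baseChange, Module.finrank_matrix] at h
    simpa [pow_two] using h
  let ρ : D →ₐ[K] Matrix (Fin n) (Fin n) (SeparableClosure K) :=
    (e.toAlgHom.restrictScalars K).comp Algebra.TensorProduct.includeRight
  let b := Module.finBasis K D
  let entry (x : Fin (Module.finrank K D) × Fin n × Fin n) := ρ (b x.1) x.2.1 x.2.2
  let L := FiniteGaloisIntermediateField.adjoin K (Set.range entry)
  have hmem (x i j) : ρ x i j ∈ L.toIntermediateField := by
    rw [← b.sum_repr x, map_sum]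
    simp only [map_smul, Matrix.sum_apply, Matrix.smul_apply]
    exact sum_mem fun t _ => IntermediateField.smul_mem _
      (FiniteGaloisIntermediateField.subset_adjoin K _
        (Set.mem_range_self (f := entry) (t, i, j)))
  let ι : Matrix (Fin n) (Fin n) L.toIntermediateField →ₐ[K]
      Matrix (Fin n) (Fin n) (SeparableClosure K) := L.toIntermediateField.val.mapMatrix
  have hι : Function.Injective ι := Matrix.map_injective Subtype.val_injective
  have hrange (x : D) : ρ x ∈ ι.range := by
    let M : Matrix (Fin n) (Fin n) L.toIntermediateField :=
      Matrix.of fun i j => ⟨ρ x i j, hmem x i j⟩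
    exact ⟨M, rfl⟩
  refine ⟨n, L.toIntermediateField, hn, hD, L.finiteDimensional, L.isGalois, ⟨?_⟩⟩
  exact (AlgEquiv.ofInjective ι hι).symm.toAlgHom.comp (ρ.codRestrict ι.range hrange)

variable (K D) in
theorem exists_galoisSplitting : ∃ (n : ℕ) (L : IntermediateField K (SeparableClosure K)),
    n ≠ 0 ∧ Module.finrank K D = n ^ 2 ∧ FiniteDimensional K L ∧ IsGalois K L ∧
      Nonempty (GaloisSplitting K L D n) := by
  obtain ⟨n, L, hn, hD, hfin, hgal, ⟨ρ⟩⟩ := exists_rep_over_finite_galois K D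
  have : NeZero n := ⟨hn⟩
  exact ⟨n, L, hn, hD, hfin, hgal, exists_galoisSplitting_of_rep hD ρ⟩

end Existence

end GaloisSplitting

section Commutant

variable {k F V Γ : Type*} [Field k] [Field F] [Algebra k F] [AddCommGroup V] [Module F V]

/-- Artin's argument: a relation of minimal support, normalized at one index, has coefficients
fixed by every `φ γ`. -/
theorem linearIndependent_of_fixed_coeffs {I : Type*} {f : I → V} (φ : Γ → F →+* F)
    (hφ : ∀ γ (l : I →₀ F), Finsupp.linearCombination F f l = 0 →
      Finsupp.linearCombination F f (l.mapRange (φ γ) (map_zero _)) = 0)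
    (hfixed : ∀ l : I →₀ F, (∀ γ i, φ γ (l i) = l i) →
      Finsupp.linearCombination F f l = 0 → l = 0) :
    LinearIndependent F f := by
  rw [linearIndependent_iff]
  intro l hl
  induction hn : l.support.card using Nat.strong_induction_on generalizing l with
  | _ n ih =>
    by_contra hne
    obtain ⟨i₀, hi₀⟩ := Finsupp.support_nonempty_iff.2 hne
    let l' := (l i₀)⁻¹ • l
    have hl' : Finsupp.linearCombination F f l' = 0 := by rw [map_smul, hl, smul_zero]
    have hl'i₀ : l' i₀ = 1 := by simp [l', Finsupp.mem_support_iff.1 hi₀]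
    have hl'fixed (γ i) : φ γ (l' i) = l' i := by
      let m := l'.mapRange (φ γ) (map_zero _) - l'
      have hm : Finsupp.linearCombination F f m = 0 := by rw [map_sub, hφ γ l' hl', hl', sub_zero]
      have hsupport : m.support ⊂ l.support := by
        refine ⟨fun i => ?_, fun h => Finsupp.mem_support_iff.1 (h hi₀) (by simp [m, hl'i₀])⟩
        rw [Finsupp.mem_support_iff, Finsupp.mem_support_iff]
        exact fun hi h => hi (by simp [m, l', h])
      have hm0 := ih _ (hn ▸ Finset.card_lt_card hsupport) m hm rfl
      exact sub_eq_zero.1 (DFunLike.congr_fun hm0 i)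
    simp [hfixed l' hl'fixed hl'] at hl'i₀

variable [Module k V] [IsScalarTower k F V] {φ : Γ → F →ₐ[k] F}

/-- The `F`-linear endomorphisms commuting with all members of a family of semilinear maps. -/
def commutant (T : ∀ γ, V →ₛₗ[(φ γ : F →+* F)] V) : Subalgebra k (Module.End F V) where
  carrier := {f | ∀ γ v, f (T γ v) = T γ (f v)}
  mul_mem' hf hg γ v := by rw [Module.End.mul_apply, hg, hf, Module.End.mul_apply]
  add_mem' hf hg γ v := by rw [LinearMap.add_apply, LinearMap.add_apply, hf, hg, map_add]
  algebraMap_mem' a γ v := by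
    rw [Module.algebraMap_end_apply, Module.algebraMap_end_apply, ← algebraMap_smul F a,
      ← algebraMap_smul F a, map_smulₛₗ, RingHom.coe_coe, AlgHom.commutes]

variable {T : ∀ γ, V →ₛₗ[(φ γ : F →+* F)] V}

theorem linearCombination_eq_zero_of_mem_commutant {I : Type*} {f : I → commutant T} {γ : Γ}
    (hγ : Function.Surjective (T γ)) {l : I →₀ F}
    (hl : Finsupp.linearCombination F (fun i => (f i).val) l = 0) :
    Finsupp.linearCombination F (fun i => (f i).val)
      (l.mapRange (φ γ : F →+* F) (map_zero _)) = 0 := by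
  ext v
  obtain ⟨v, rfl⟩ := hγ v
  have h := congrArg (fun g : Module.End F V => T γ (g v)) hl
  rw [Finsupp.linearCombination_apply, Finsupp.sum_mapRange_index (by simp)]
  simpa [Finsupp.linearCombination_apply, Finsupp.sum, map_sum, (f _).2 γ v] using h

variable [FiniteDimensional F V]

theorem isUnit_or_eq_zero_of_mem_commutant
    (hT : ∀ P : Submodule F V, (∀ γ, ∀ v ∈ P, T γ v ∈ P) →
      Module.finrank F V ∣ Module.finrank F P) (f : commutant T) : IsUnit f ∨ f = 0 := by
  obtain ⟨f, hf⟩ := f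
  have hker : ∀ γ, ∀ v ∈ LinearMap.ker f, T γ v ∈ LinearMap.ker f := fun γ v hv => by
    rw [LinearMap.mem_ker, hf, LinearMap.mem_ker.1 hv, map_zero]
  obtain hbot | hpos := (Module.finrank F (LinearMap.ker f)).eq_zero_or_pos
  · obtain ⟨u, rfl⟩ := (LinearMap.isUnit_iff_ker_eq_bot f).2 (Submodule.finrank_eq_zero.1 hbot)
    have hcancel (v) : u.val (u⁻¹.val v) = v := LinearMap.congr_fun u.mul_inv v
    have hcancel' (v) : u⁻¹.val (u.val v) = v := LinearMap.congr_fun u.inv_mul v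
    have hinv : u⁻¹.val ∈ commutant T := fun γ v => by
      conv_lhs => rw [← hcancel v, ← hf, hcancel']
    exact .inl ⟨⟨⟨u, hf⟩, ⟨u⁻¹.val, hinv⟩, Subtype.ext u.mul_inv, Subtype.ext u.inv_mul⟩, rfl⟩
  · have htop := Submodule.eq_top_of_finrank_eq
      ((Submodule.finrank_le _).antisymm (Nat.le_of_dvd hpos (hT _ hker)))
    exact .inr (Subtype.ext (LinearMap.ker_eq_top.1 htop))

theorem finite_center_commutant (hdiv : ∀ f : commutant T, IsUnit f ∨ f = 0)
    (hT : ∀ γ, Function.Surjective (T γ)) [Nontrivial V] :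
    Module.Finite (Subring.center (commutant T)) (commutant T) := by
  let := DivisionRing.ofIsUnitOrEqZero hdiv
  let b := Module.Basis.ofVectorSpace (Subring.center (commutant T)) (commutant T)
  have hindep : LinearIndependent F fun i => (b i).val := by
    refine linearIndependent_of_fixed_coeffs (fun γ => (φ γ : F →+* F))
      (fun γ l => linearCombination_eq_zero_of_mem_commutant (hT γ)) fun l hl hsum => ?_
    have hmem (i) : algebraMap F (Module.End F V) (l i) ∈ commutant T := fun γ v => by
      have h : (φ γ : F →+* F) (l i) = l i := hl γ i
      rw [Module.algebraMap_end_apply, Module.algebraMap_end_apply, map_smulₛₗ, h]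
    have hcenter (i) : (⟨_, hmem i⟩ : commutant T) ∈ Subring.center (commutant T) :=
      Subring.mem_center_iff.2 fun g => Subtype.ext (Algebra.commutes (l i) g.val).symm
    let m (i) : Subring.center (commutant T) := ⟨⟨_, hmem i⟩, hcenter i⟩
    have hrel : ∑ i ∈ l.support, m i • b i = 0 := by
      refine Subtype.ext ?_
      rw [AddSubmonoidClass.coe_finsetSum]
      exact (Finset.sum_congr rfl fun i _ => (Algebra.smul_def (l i) (b i).val).symm).trans hsum
    ext i
    by_contra hi
    have hmi := linearIndependent_iff'.1 b.linearIndependent l.support m hrel i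
      (Finsupp.mem_support_iff.2 hi)
    exact hi ((algebraMap F (Module.End F V)).injective
      ((congrArg (fun z : Subring.center (commutant T) => z.val.val) hmi).trans (map_zero _).symm))
  have := hindep.finite
  exact Module.Finite.of_basis b

end Commutant

section WeightSpaces

open Module

variable {F W Λ : Type*} [Field F] [AddCommGroup W] [Module F W]

theorem finrank_eq_sum_finrank_map [Fintype Λ] {e : Λ → End F W}
    (he : CompleteOrthogonalIdempotents e) (V : Submodule F W) [FiniteDimensional F V]
    (hV : ∀ l, ∀ v ∈ V, e l v ∈ V) : finrank F V = ∑ l, finrank F (V.map (e l)) := by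
  classical
  have hsum (v : W) : ∑ l, e l v = v := by simpa using congrArg (· v) he.complete
  have hle (l : Λ) : V.map (e l) ≤ V := Submodule.map_le_iff_le_comap.2 (hV l)
  have hproj (l m : Λ) (x : V.map (e m)) : e l x = if l = m then (x : W) else 0 := by
    obtain ⟨_, v, -, rfl⟩ := x
    split_ifs with h
    · subst h
      exact congrArg (· v) (he.idem l).eq
    · exact congrArg (· v) (he.ortho h)
  let components : V →ₗ[F] ∀ l, V.map (e l) :=
    LinearMap.pi fun l => (e l).restrict fun v hv => Submodule.mem_map_of_mem hv
  have hbij : Function.Bijective components := by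
    refine ⟨(injective_iff_map_eq_zero _).2 fun v hv => Subtype.ext ?_, fun x => ?_⟩
    · rw [← hsum v]
      exact Finset.sum_eq_zero fun l _ => congrArg Subtype.val (congrFun hv l)
    · refine ⟨⟨∑ l, (x l : W), sum_mem fun l _ => hle l (x l).2⟩, funext fun l => Subtype.ext ?_⟩
      change e l (∑ m, (x m : W)) = x l
      simp [hproj]
  have (l : Λ) : FiniteDimensional F (V.map (e l)) := Submodule.finiteDimensional_of_le (hle l)
  rw [(LinearEquiv.ofBijective components hbij).finrank_eq, finrank_pi_fintype]

theorem finrank_eq_card_mul_finrank_map [AddGroup Λ] [Fintype Λ] {e : Λ → End F W}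
    (he : CompleteOrthogonalIdempotents e) (V : Submodule F W) [FiniteDimensional F V]
    (hV : ∀ l, ∀ v ∈ V, e l v ∈ V) {shift : End F W} (hinj : Function.Injective shift)
    (hshift : ∀ v ∈ V, shift v ∈ V) {u : Λ} (hu : ∀ l, l ∈ AddSubmonoid.multiples u)
    (hcomm : ∀ l, ∀ v ∈ V, shift (e l v) = e (l + u) (shift v)) :
    finrank F V = Fintype.card Λ * finrank F (V.map (e 0)) := by
  have (l : Λ) : FiniteDimensional F (V.map (e l)) :=
    Submodule.finiteDimensional_of_le (Submodule.map_le_iff_le_comap.2 (hV l))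
  have hmono (l : Λ) : finrank F (V.map (e l)) ≤ finrank F (V.map (e (l + u))) := by
    rw [(Submodule.equivMapOfInjective shift hinj _).finrank_eq]
    refine Submodule.finrank_mono ?_
    rintro _ ⟨_, ⟨v, hv, rfl⟩, rfl⟩
    exact ⟨shift v, hshift v hv, (hcomm l v hv).symm⟩
  have hmono_nsmul (l : Λ) (n : ℕ) :
      finrank F (V.map (e l)) ≤ finrank F (V.map (e (l + n • u))) := by
    induction n with
    | zero => rw [zero_nsmul, add_zero]
    | succ n ih =>
      rw [succ_nsmul, ← add_assoc]
      exact ih.trans (hmono _)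
  have hconst (l : Λ) : finrank F (V.map (e l)) = finrank F (V.map (e 0)) := by
    obtain ⟨m, hm : m • u = -l⟩ := hu (-l)
    obtain ⟨n, hn : n • u = l⟩ := hu l
    refine le_antisymm ?_ ?_
    · calc
        _ ≤ _ := hmono_nsmul l m
        _ = _ := by rw [hm, add_neg_cancel]
    · calc
        _ ≤ _ := hmono_nsmul 0 n
        _ = _ := by rw [hn, zero_add]
  rw [finrank_eq_sum_finrank_map he V hV, Finset.sum_congr rfl fun l _ => hconst l,
    Finset.sum_const, Finset.card_univ, smul_eq_mul]

end WeightSpaces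

noncomputable section Labels

open MvPolynomial

variable {Ω ι τ Λ Λ' : Type*} [Field Ω] [AddCommGroup Λ] [AddCommGroup Λ']

/-- A vector of polynomials has label `l` if its `i`-th entry is weighted homogeneous of weight
`l - w₀ i`. In other words, the `i`-th standard basis vector has label `w₀ i` and the variable `X x`
has label `w x`. -/
def HasLabel (w₀ : ι → Λ) (w : τ → Λ) (l : Λ) (v : ι → MvPolynomial τ Ω) : Prop :=
  ∀ i, IsWeightedHomogeneous w (v i) (l - w₀ i)

/-- The component of label `l` of a vector of polynomials. -/
def labelComponent (w₀ : ι → Λ) (w : τ → Λ) (l : Λ) : Module.End Ω (ι → MvPolynomial τ Ω) :=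
  LinearMap.pi fun i => weightedHomogeneousComponent w (l - w₀ i) ∘ₗ LinearMap.proj i

variable {w₀ : ι → Λ} {w : τ → Λ} {l m : Λ} {v : ι → MvPolynomial τ Ω}

theorem coeff_labelComponent [DecidableEq Λ] (i : ι) (d : τ →₀ ℕ) :
    coeff d (labelComponent w₀ w l v i) =
      if w₀ i + Finsupp.weight w d = l then coeff d (v i) else 0 := by
  change coeff d (weightedHomogeneousComponent w (l - w₀ i) (v i)) = _
  rw [coeff_weightedHomogeneousComponent]
  simp only [eq_sub_iff_add_eq']

theorem hasLabel_labelComponent : HasLabel w₀ w l (labelComponent w₀ w l v) :=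
  fun _ => weightedHomogeneousComponent_isWeightedHomogeneous _ _

theorem HasLabel.labelComponent_eq [DecidableEq Λ] (hv : HasLabel w₀ w m v) :
    labelComponent w₀ w l v = if l = m then v else 0 := by
  funext i
  refine (weightedHomogeneousComponent_of_mem (hv i)).trans ?_
  simp only [sub_left_inj]
  split_ifs <;> rfl

theorem HasLabel.map (hv : HasLabel w₀ w l v) (π : Λ →+ Λ') :
    HasLabel (π ∘ w₀) (π ∘ w) (π l) v := fun i d hd => by
  rw [Function.comp_apply, ← map_sub, ← hv i hd, Finsupp.weight_apply, Finsupp.weight_apply]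
  simp [Finsupp.sum]

theorem completeOrthogonalIdempotents_labelComponent [Fintype Λ] (w₀ : ι → Λ) (w : τ → Λ) :
    CompleteOrthogonalIdempotents (labelComponent (Ω := Ω) w₀ w) := by
  classical
  refine CompleteOrthogonalIdempotents.iff_ortho_complete.2
    ⟨fun l m hlm => LinearMap.ext fun v => ?_, LinearMap.ext fun v => ?_⟩
  · exact (hasLabel_labelComponent (v := v)).labelComponent_eq.trans (if_neg hlm)
  · ext i d
    simp [coeff_sum, coeff_labelComponent]

theorem exists_finset_sum_labelComponent [Finite ι] (w₀ : ι → Λ) (w : τ → Λ)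
    (v : ι → MvPolynomial τ Ω) : ∃ S : Finset Λ, ∑ l ∈ S, labelComponent w₀ w l v = v := by
  classical
  have := Fintype.ofFinite ι
  refine ⟨Finset.univ.biUnion fun i => (v i).support.image fun d => w₀ i + Finsupp.weight w d, ?_⟩
  ext i d
  simp only [Finset.sum_apply, coeff_sum, coeff_labelComponent, Finset.sum_ite_eq]
  by_cases h : coeff d (v i) = 0
  · simp [h]
  · refine if_pos (Finset.mem_biUnion.2 ⟨i, Finset.mem_univ i, ?_⟩)
    exact Finset.mem_image_of_mem _ (mem_support_iff.2 h)

theorem labelComponent_map_mem [Finite ι] {V : Submodule Ω (ι → MvPolynomial τ Ω)}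
    (hv : ∀ l, labelComponent w₀ w l v ∈ V) (π : Λ →+ Λ') (l' : Λ') :
    labelComponent (π ∘ w₀) (π ∘ w) l' v ∈ V := by
  classical
  obtain ⟨S, hS⟩ := exists_finset_sum_labelComponent w₀ w v
  rw [← hS, map_sum]
  refine sum_mem fun l _ => ?_
  rw [(hasLabel_labelComponent.map π).labelComponent_eq]
  split_ifs
  exacts [hv l, zero_mem V]

theorem homogeneousComponent_eq_labelComponent (v : ι → MvPolynomial τ Ω) (j : ℕ) :
    (fun i => homogeneousComponent j (v i)) =
      labelComponent (0 : ι → ℤ) (1 : τ → ℤ) j v := by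
  classical
  ext i d
  rw [coeff_homogeneousComponent, coeff_labelComponent, Finsupp.weight_apply,
    Finsupp.degree_apply]
  simp [Finsupp.sum, ← Nat.cast_sum]

theorem injective_zpow_units [Infinite Ω] :
    Function.Injective fun (l : ℤ) (u : Ωˣ) => u ^ l := by
  intro l m hlm
  have hpow (u : Ωˣ) : u ^ (l - m).natAbs = 1 := by
    rw [pow_natAbs_eq_one, zpow_sub, mul_inv_eq_one]
    exact congrFun hlm u
  have hpoly : (Polynomial.X : Polynomial Ω) ^ ((l - m).natAbs + 1) = Polynomial.X := by
    refine Polynomial.funext fun r => ?_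
    rcases eq_or_ne r 0 with rfl | hr
    · simp
    · simpa [pow_succ, hr] using congrArg Units.val (hpow (Units.mk0 r hr))
  have hdegree := congrArg Polynomial.natDegree hpoly
  rw [Polynomial.natDegree_X_pow, Polynomial.natDegree_X] at hdegree
  lia

theorem mem_of_sum_zpow_smul_mem [Infinite Ω] {W : Type*} [AddCommGroup W] [Module Ω W]
    {V : Submodule Ω W} {S : Finset ℤ} {x : ℤ → W}
    (h : ∀ u : Ωˣ, ∑ l ∈ S, u ^ l • x l ∈ V) {l : ℤ} (hl : l ∈ S) : x l ∈ V := by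
  by_contra hx
  obtain ⟨f, hfx, hVf⟩ := Submodule.exists_le_ker_of_notMem hx
  let character (m : ℤ) : Ωˣ →* Ω := (Units.coeHom Ω).comp (zpowGroupHom m)
  have hinj : Function.Injective character := fun m m' hm =>
    injective_zpow_units (funext fun u => Units.ext (DFunLike.congr_fun hm u))
  have hindep := (linearIndependent_monoidHom Ωˣ Ω).comp character hinj
  refine hfx (linearIndependent_iff'.1 hindep S (fun m => f (x m)) (funext fun u => ?_) l hl)
  have hfu : f (∑ m ∈ S, u ^ m • x m) = 0 := hVf (h u)
  simpa [character, Units.smul_def, mul_comm] using hfu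

end Labels

noncomputable section Twists

open MvPolynomial
open scoped Matrix Kronecker

section SemilinearMulVec

variable {k R ι : Type*} [CommRing k] [CommRing R] [Algebra k R] [Fintype ι]

/-- The semilinear endomorphism of `ι → R` given by a matrix, twisted by an endomorphism of `R`
applied to the coordinates. -/
def semilinearMulVec (φ : R →ₐ[k] R) (P : Matrix ι ι R) :
    (ι → R) →ₛₗ[(φ : R →+* R)] (ι → R) where
  toFun v := P *ᵥ (φ ∘ v)
  map_add' v v' := by rw [← Matrix.mulVec_add]; congr 1; ext; simp
  map_smul' a v := by
    rw [RingHom.coe_coe, ← Matrix.mulVec_smul]; congr 1; ext; simp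

theorem semilinearMulVec_apply (φ : R →ₐ[k] R) (P : Matrix ι ι R) (v : ι → R) :
    semilinearMulVec φ P v = P *ᵥ (φ ∘ v) := rfl

theorem semilinearMulVec_semilinearMulVec (φ ψ : R →ₐ[k] R) (P Q : Matrix ι ι R) (v : ι → R) :
    semilinearMulVec φ P (semilinearMulVec ψ Q v) =
      semilinearMulVec (φ.comp ψ) (P * Q.map φ) v := by
  simp only [semilinearMulVec_apply]
  rw [← Matrix.mulVec_mulVec]
  congr 1
  exact funext ((φ : R →+* R).map_mulVec Q (ψ ∘ v))

end SemilinearMulVec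

variable {k Ω ι : Type*} [Field k] [Field Ω] [Algebra k Ω] [Fintype ι] [DecidableEq ι]

variable (k Ω ι) in
/-- A twist is an automorphism of the field `Ω` together with two invertible matrices. It acts on
the generic matrix `g` by `g ↦ left⁻¹ * g * right`, on scalars by `scalar`, and on column vectors
by `v ↦ left * v`. -/
@[ext]
structure Twist where
  /-- The action on scalars. -/
  scalar : Ω ≃ₐ[k] Ω
  /-- The matrix acting on vectors, whose inverse acts on the left of the generic matrix. -/
  left : GL ι Ω
  /-- The matrix acting on the right of the generic matrix. -/
  right : GL ι Ω

namespace Twist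

instance : Mul (Twist k Ω ι) where
  mul α β :=
    { scalar := α.scalar * β.scalar
      left := α.left * β.left.map (α.scalar : Ω →+* Ω)
      right := α.right * β.right.map (α.scalar : Ω →+* Ω) }

instance : One (Twist k Ω ι) := ⟨⟨1, 1, 1⟩⟩

instance : Inv (Twist k Ω ι) where
  inv α :=
    { scalar := α.scalar⁻¹
      left := (α.left⁻¹).map (α.scalar.symm : Ω →+* Ω)
      right := (α.right⁻¹).map (α.scalar.symm : Ω →+* Ω) }

theorem mul_map_mul_map (s t : Ω ≃ₐ[k] Ω) (A B C : GL ι Ω) :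
    A * B.map (s : Ω →+* Ω) * C.map ((s * t : Ω ≃ₐ[k] Ω) : Ω →+* Ω) =
      A * (B * C.map (t : Ω →+* Ω)).map (s : Ω →+* Ω) := by
  rw [map_mul, mul_assoc]
  rfl

instance : Group (Twist k Ω ι) :=
  Group.ofLeftAxioms
    (fun _ _ _ => Twist.ext rfl (mul_map_mul_map _ _ _ _ _) (mul_map_mul_map _ _ _ _ _))
    (fun _ => Twist.ext (one_mul _) (one_mul _) (one_mul _))
    (fun _ => Twist.ext (inv_mul_cancel _)
      (Matrix.GeneralLinearGroup.map_inv_mul_map _ _)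
      (Matrix.GeneralLinearGroup.map_inv_mul_map _ _))

theorem one_left : (1 : Twist k Ω ι).left = 1 := rfl

theorem one_right : (1 : Twist k Ω ι).right = 1 := rfl

theorem mul_left_val (α β : Twist k Ω ι) :
    (α * β).left.val = α.left.val * β.left.val.map α.scalar := rfl

theorem mul_right_val (α β : Twist k Ω ι) :
    (α * β).right.val = α.right.val * β.right.val.map α.scalar := rfl

theorem mul_left_inv_val (α β : Twist k Ω ι) :
    (α * β).left⁻¹.val = β.left⁻¹.val.map α.scalar * α.left⁻¹.val := rfl

/-- The coefficients of the linear substitution which replaces the generic matrix `g` by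
`left⁻¹ * g * right`. -/
def coeffs (α : Twist k Ω ι) : Matrix (ι × ι) (ι × ι) Ω :=
  α.left⁻¹.valᵀ ⊗ₖ α.right.val

theorem coeffs_mul (α β : Twist k Ω ι) :
    (α * β).coeffs = α.coeffs * β.coeffs.map α.scalar := by
  rw [coeffs, mul_left_inv_val, mul_right_val, Matrix.transpose_mul, Matrix.mul_kronecker_mul]
  congr 1
  ext
  simp [coeffs]

/-- The action of twists on the polynomial ring in the entries of the generic matrix. -/
def substHom : Twist k Ω ι →* (MvPolynomial (ι × ι) Ω →ₐ[k] MvPolynomial (ι × ι) Ω) where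
  toFun α := semilinearSubst (α.scalar : Ω →ₐ[k] Ω) α.coeffs
  map_one' := by
    rw [show (1 : Twist k Ω ι).coeffs = 1 by simp [coeffs, one_left, one_right]]
    exact semilinearSubst_one
  map_mul' α β := AlgHom.ext fun p => by
    rw [AlgHom.mul_apply, semilinearSubst_semilinearSubst, coeffs_mul]
    rfl

/-- The action of twists on the polynomial ring by automorphisms. -/
def subst : Twist k Ω ι →* (MvPolynomial (ι × ι) Ω ≃ₐ[k] MvPolynomial (ι × ι) Ω) :=
  (AlgEquiv.algHomUnitsEquiv k _).toMonoidHom.comp substHom.toHomUnits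

theorem subst_apply (α : Twist k Ω ι) (p : MvPolynomial (ι × ι) Ω) :
    subst α p = semilinearSubst (α.scalar : Ω →ₐ[k] Ω) α.coeffs p := rfl

theorem subst_C (α : Twist k Ω ι) (a : Ω) : subst α (C a) = C (α.scalar a) := by
  simp [subst_apply]

theorem map_subst_mvPolynomialX (α : Twist k Ω ι) :
    (Matrix.mvPolynomialX ι ι Ω).map (subst α) =
      α.left⁻¹.val.map C * Matrix.mvPolynomialX ι ι Ω * α.right.val.map C := by
  ext1 i j
  simp only [Matrix.map_apply, Matrix.mvPolynomialX_apply, Matrix.mul_apply, Finset.sum_mul,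
    subst_apply, semilinearSubst_X, Fintype.sum_prod_type, coeffs, Matrix.kroneckerMap_apply,
    Matrix.transpose_apply, smul_eq_C_mul, C_mul]
  rw [Finset.sum_comm]
  simp only [mul_right_comm]

end Twist

variable (Ω ι) in
/-- The field of rational functions in the entries of the generic matrix. -/
abbrev GenericField : Type _ := FractionRing (MvPolynomial (ι × ι) Ω)

variable (Ω ι) in
/-- The generic matrix, whose entries are independent variables. -/
def genericMatrix : GL ι (GenericField Ω ι) :=
  Matrix.GeneralLinearGroup.mkOfDetNeZero
    ((Matrix.mvPolynomialX ι ι Ω).map (algebraMap _ (GenericField Ω ι))) <| by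
    rw [← RingHom.mapMatrix_apply, ← RingHom.map_det]
    exact (map_ne_zero_iff _ (IsFractionRing.injective _ _)).2
      (Matrix.det_mvPolynomialX_ne_zero ι Ω)

namespace Twist

/-- The action of twists on the field of rational functions in the entries of the generic
matrix. -/
def genericSubst : Twist k Ω ι →* (GenericField Ω ι ≃ₐ[k] GenericField Ω ι) :=
  (IsFractionRing.fieldEquivOfAlgEquivHom k (GenericField Ω ι)).comp subst

theorem genericSubst_algebraMap_poly (α : Twist k Ω ι) (p : MvPolynomial (ι × ι) Ω) :
    genericSubst α (algebraMap _ _ p) = algebraMap _ (GenericField Ω ι) (subst α p) :=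
  IsFractionRing.fieldEquivOfAlgEquiv_algebraMap _ _ _ _ _

theorem genericSubst_algebraMap (α : Twist k Ω ι) (a : Ω) :
    genericSubst α (algebraMap Ω (GenericField Ω ι) a) = algebraMap _ _ (α.scalar a) := by
  rw [IsScalarTower.algebraMap_apply Ω (MvPolynomial (ι × ι) Ω), genericSubst_algebraMap_poly,
    algebraMap_eq, subst_C, ← algebraMap_eq, ← IsScalarTower.algebraMap_apply]

theorem map_genericSubst_genericMatrix (α : Twist k Ω ι) :
    (genericMatrix Ω ι).val.map (genericSubst α) =
      α.left⁻¹.val.map (algebraMap _ _) * (genericMatrix Ω ι).val *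
        α.right.val.map (algebraMap _ _) := by
  have h := congrArg (Matrix.map · (algebraMap _ (GenericField Ω ι)))
    (map_subst_mvPolynomialX α)
  simp only [Matrix.map_mul] at h
  refine Eq.trans ?_ h
  ext i j
  exact genericSubst_algebraMap_poly α (X (i, j))

/-- The semilinear action of a twist on vectors of polynomials. -/
def polyAct (α : Twist k Ω ι) :
    (ι → MvPolynomial (ι × ι) Ω) →ₛₗ[(((subst α).toAlgHom : _ →ₐ[k] _) :
      MvPolynomial (ι × ι) Ω →+* MvPolynomial (ι × ι) Ω)] (ι → MvPolynomial (ι × ι) Ω) :=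
  semilinearMulVec (subst α).toAlgHom (α.left.val.map C)

/-- The semilinear action of a twist on vectors of rational functions. -/
def genericAct (α : Twist k Ω ι) :
    (ι → GenericField Ω ι) →ₛₗ[(((genericSubst α).toAlgHom : _ →ₐ[k] _) :
      GenericField Ω ι →+* GenericField Ω ι)] (ι → GenericField Ω ι) :=
  semilinearMulVec (genericSubst α).toAlgHom (α.left.val.map (algebraMap _ _))

theorem polyAct_apply (α : Twist k Ω ι) (v : ι → MvPolynomial (ι × ι) Ω) (i : ι) :
    polyAct α v i = ∑ j, α.left.val i j • subst α (v j) := by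
  simp only [smul_eq_C_mul]
  rfl

theorem polyAct_mul (α β : Twist k Ω ι) (v : ι → MvPolynomial (ι × ι) Ω) :
    polyAct (α * β) v = polyAct α (polyAct β v) := by
  have hleft : (β.left.val.map C).map (subst α).toAlgHom = (β.left.val.map α.scalar).map C := by
    ext1
    exact subst_C α _
  rw [polyAct, polyAct, polyAct, semilinearMulVec_semilinearMulVec, mul_left_val, Matrix.map_mul,
    hleft, map_mul]
  rfl

theorem polyAct_one (v : ι → MvPolynomial (ι × ι) Ω) :
    polyAct (1 : Twist k Ω ι) v = v := by
  rw [polyAct, semilinearMulVec_apply, one_left, map_one, Units.val_one,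
    Matrix.map_one _ (map_zero _) (map_one _), Matrix.one_mulVec]
  rfl

theorem polyAct_smul (α : Twist k Ω ι) (a : Ω) (v : ι → MvPolynomial (ι × ι) Ω) :
    polyAct α (a • v) = α.scalar a • polyAct α v := by
  ext1 i
  simp only [Pi.smul_apply, polyAct_apply, smul_eq_C_mul, map_mul, subst_C, Finset.mul_sum,
    mul_left_comm]

theorem genericAct_mul (α β : Twist k Ω ι) (v : ι → GenericField Ω ι) :
    genericAct (α * β) v = genericAct α (genericAct β v) := by
  have hleft : (β.left.val.map (algebraMap Ω (GenericField Ω ι))).map (genericSubst α).toAlgHom =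
      (β.left.val.map α.scalar).map (algebraMap _ _) := by
    ext1
    exact genericSubst_algebraMap α _
  rw [genericAct, genericAct, genericAct, semilinearMulVec_semilinearMulVec, mul_left_val,
    Matrix.map_mul, hleft, map_mul]
  rfl

theorem genericAct_one (v : ι → GenericField Ω ι) : genericAct (1 : Twist k Ω ι) v = v := by
  rw [genericAct, semilinearMulVec_apply, one_left, map_one, Units.val_one,
    Matrix.map_one _ (map_zero _) (map_one _), Matrix.one_mulVec]
  rfl

theorem genericAct_surjective (α : Twist k Ω ι) : Function.Surjective (genericAct α) := fun v =>
  ⟨genericAct α⁻¹ v, by rw [← genericAct_mul, mul_inv_cancel, genericAct_one]⟩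

theorem algebraMap_comp_polyAct (α : Twist k Ω ι) (v : ι → MvPolynomial (ι × ι) Ω) :
    algebraMap _ (GenericField Ω ι) ∘ polyAct α v = genericAct α (algebraMap _ _ ∘ v) := by
  ext1 i
  rw [Function.comp_apply, polyAct_apply, map_sum]
  refine Finset.sum_congr rfl fun j _ => ?_
  rw [algebraMap.smul, ← genericSubst_algebraMap_poly, Algebra.smul_def]
  rfl

end Twist

end Twists

noncomputable section Torus

open MvPolynomial
open scoped Matrix Kronecker

theorem isWeightedHomogeneous_add_const {R τ Λ : Type*} [CommSemiring R] [AddCommMonoid Λ]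
    {w : τ → Λ} {p : MvPolynomial τ R} {l : Λ} {n : ℕ} (hp : IsWeightedHomogeneous w p l)
    (hn : p.IsHomogeneous n) (u : Λ) :
    IsWeightedHomogeneous (fun x => w x + u) p (l + n • u) := fun d hd => by
  have hdegree : d.sum (fun _ m => m) = n := by
    simpa [Finsupp.weight_apply] using hn hd
  rw [← hp hd, ← hdegree, Finsupp.weight_apply, Finsupp.weight_apply]
  simp only [smul_add, Finsupp.sum_add]
  rw [Finsupp.sum, Finsupp.sum, Finsupp.sum, Finset.sum_smul]

/-- The weight of the entries of the generic matrix when the rows have weights `-wa` and the columns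
have weights `wb`. -/
def entryWeight {ι Λ : Type*} [Sub Λ] (wa wb : ι → Λ) (x : ι × ι) : Λ := wb x.2 - wa x.1

/-- A matrix shifts weights by `u` if it raises the weights of the standard basis vectors by `u`. -/
def ShiftsWeight {ι Λ R : Type*} [Zero R] [Add Λ] (w : ι → Λ) (u : Λ) (M : Matrix ι ι R) : Prop :=
  ∀ i j, M i j ≠ 0 → w i = w j + u

variable {k Ω ι Λ : Type*} [Field k] [Field Ω] [Algebra k Ω] [Fintype ι] [DecidableEq ι]

/-- The invertible diagonal matrix with the given units on its diagonal. -/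
def diagonalUnits : (ι → Ωˣ) →* GL ι Ω :=
  (Units.map (Matrix.diagonalRingHom ι Ω).toMonoidHom).comp MulEquiv.piUnits.symm.toMonoidHom

theorem diagonalUnits_val (d : ι → Ωˣ) :
    (diagonalUnits d).val = Matrix.diagonal fun i => (d i : Ω) := rfl

theorem diagonalUnits_inv_val (d : ι → Ωˣ) :
    (diagonalUnits d)⁻¹.val = Matrix.diagonal fun i => ((d i)⁻¹ : Ω) := by
  rw [← map_inv, diagonalUnits_val]
  simp

namespace Twist

/-- The one-parameter torus of twists attached to integral weights of the rows and columns of the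
generic matrix. -/
def torus (wa wb : ι → ℤ) (u : Ωˣ) : Twist k Ω ι :=
  ⟨1, diagonalUnits fun i => u ^ wa i, diagonalUnits fun i => u ^ wb i⟩

theorem torus_left (wa wb : ι → ℤ) (u : Ωˣ) :
    (torus (k := k) wa wb u).left = diagonalUnits fun i => u ^ wa i := rfl

theorem torus_right (wa wb : ι → ℤ) (u : Ωˣ) :
    (torus (k := k) wa wb u).right = diagonalUnits fun i => u ^ wb i := rfl

theorem subst_torus (wa wb : ι → ℤ) (u : Ωˣ) {p : MvPolynomial (ι × ι) Ω} {l : ℤ}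
    (hp : IsWeightedHomogeneous (entryWeight wa wb) p l) :
    subst (torus (k := k) wa wb u) p = u ^ l • p := by
  let character : Multiplicative ℤ →* Ω := (Units.coeHom Ω).comp (zpowersHom Ωˣ u)
  have hcoeffs : (torus (k := k) wa wb u).coeffs = Matrix.of fun x y =>
      (1 : Matrix (ι × ι) (ι × ι) Ω) x y * character (.ofAdd (entryWeight wa wb y)) := by
    rw [coeffs, torus_left, torus_right, diagonalUnits_inv_val, diagonalUnits_val,
      Matrix.diagonal_transpose, Matrix.diagonal_kronecker_diagonal]
    ext x y
    rcases eq_or_ne x y with rfl | hxy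
    · simp [character, entryWeight, sub_eq_neg_add, zpow_add₀]
    · simp [hxy]
  rw [subst_apply, hcoeffs, semilinearSubst_mul_character _ _ _ hp]
  exact congrArg (character (.ofAdd l) • ·) (DFunLike.congr_fun semilinearSubst_one p)

theorem polyAct_torus (wa wb : ι → ℤ) (u : Ωˣ) {v : ι → MvPolynomial (ι × ι) Ω} {l : ℤ}
    (hv : HasLabel wa (entryWeight wa wb) l v) :
    polyAct (torus (k := k) wa wb u) v = u ^ l • v := by
  ext1 i
  simp only [polyAct_apply, subst_torus wa wb u (hv _), torus_left, diagonalUnits_val]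
  rw [Finset.sum_eq_single i]
  · rw [Matrix.diagonal_apply_eq, ← Units.smul_def, smul_smul, ← zpow_add, add_sub_cancel,
      Pi.smul_apply]
  · intro j _ hj
    rw [Matrix.diagonal_apply_ne _ hj.symm, zero_smul]
  · exact fun hi => absurd (Finset.mem_univ i) hi

theorem labelComponent_mem_of_polyAct_torus_mem [Infinite Ω] {wa wb : ι → ℤ}
    {V : Submodule Ω (ι → MvPolynomial (ι × ι) Ω)} {v : ι → MvPolynomial (ι × ι) Ω}
    (hv : ∀ u, polyAct (torus (k := k) wa wb u) v ∈ V) (l : ℤ) :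
    labelComponent wa (entryWeight wa wb) l v ∈ V := by
  classical
  obtain ⟨S, hS⟩ := exists_finset_sum_labelComponent wa (entryWeight wa wb) v
  by_cases hl : l ∈ S
  · refine mem_of_sum_zpow_smul_mem
      (x := fun m => labelComponent wa (entryWeight wa wb) m v) (fun u => ?_) hl
    convert hv u using 1
    conv_rhs => rw [← hS, map_sum]
    exact Finset.sum_congr rfl fun m _ => (polyAct_torus wa wb u hasLabel_labelComponent).symm
  · convert zero_mem V
    rw [← hS, map_sum]
    refine Finset.sum_eq_zero fun m hm => ?_
    rw [hasLabel_labelComponent.labelComponent_eq, if_neg]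
    rintro rfl
    exact hl hm

theorem isHomogeneous_polyAct (α : Twist k Ω ι) {v : ι → MvPolynomial (ι × ι) Ω} {n : ℕ}
    (hv : ∀ i, (v i).IsHomogeneous n) (i : ι) : (polyAct α v i).IsHomogeneous n := by
  rw [polyAct_apply]
  refine IsWeightedHomogeneous.sum _ _ _ fun j _ => ?_
  rw [smul_eq_C_mul]
  exact (isWeightedHomogeneous_semilinearSubst (α.scalar : Ω →ₐ[k] Ω) (A := α.coeffs)
    (fun _ _ _ => rfl) (hv j)).C_mul _

/-- A twist shifts weights by `ua` and `ub` if multiplication by its left and right matrices raises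
the weights of the standard basis vectors by `ua` and `ub` respectively. -/
structure ShiftsWeights [AddCommGroup Λ] (α : Twist k Ω ι) (wa wb : ι → Λ) (ua ub : Λ) : Prop where
  left : ShiftsWeight wa ua α.left.val
  left_inv : ShiftsWeight wa (-ua) α.left⁻¹.val
  right : ShiftsWeight wb ub α.right.val

variable [AddCommGroup Λ] {α : Twist k Ω ι} {wa wb : ι → Λ} {ua ub l : Λ} {n : ℕ}

theorem isWeightedHomogeneous_subst (hα : α.ShiftsWeights wa wb ua ub)
    {p : MvPolynomial (ι × ι) Ω} (hn : p.IsHomogeneous n)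
    (hp : IsWeightedHomogeneous (entryWeight wa wb) p l) :
    IsWeightedHomogeneous (entryWeight wa wb) (subst α p) (l + n • (ub - ua)) := by
  refine isWeightedHomogeneous_semilinearSubst _ (fun x y hxy => ?_)
    (isWeightedHomogeneous_add_const hp hn _)
  have hxy' : α.left⁻¹.val y.1 x.1 * α.right.val x.2 y.2 ≠ 0 := hxy
  rw [entryWeight, entryWeight, hα.left_inv _ _ (left_ne_zero_of_mul hxy'),
    hα.right _ _ (right_ne_zero_of_mul hxy')]
  abel

theorem ShiftsWeights.hasLabel_polyAct (hα : α.ShiftsWeights wa wb ua ub)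
    {v : ι → MvPolynomial (ι × ι) Ω} (hn : ∀ i, (v i).IsHomogeneous n)
    (hv : HasLabel wa (entryWeight wa wb) l v) :
    HasLabel wa (entryWeight wa wb) (l + (ua + n • (ub - ua))) (polyAct α v) := fun i => by
  rw [polyAct_apply]
  refine IsWeightedHomogeneous.sum _ _ _ fun j _ => ?_
  by_cases hij : α.left.val i j = 0
  · rw [hij, zero_smul]
    exact isWeightedHomogeneous_zero _ _ _
  · have h := isWeightedHomogeneous_subst hα (hn j) (hv j)
    rw [hα.left i j hij, smul_eq_C_mul]
    convert h.C_mul (α.left.val i j) using 1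
    abel

end Twist

end Torus

noncomputable section StableSubspaces

open MvPolynomial Module

variable {k Ω ι : Type*} [Field k] [Field Ω] [Algebra k Ω] [Fintype ι] [DecidableEq ι]

namespace Twist

theorem polyAct_torus_const (a b : ℤ) (u : Ωˣ) {v : ι → MvPolynomial (ι × ι) Ω} {n : ℕ}
    (hv : ∀ i, (v i).IsHomogeneous n) :
    polyAct (torus (k := k) (fun _ => a) (fun _ => b) u) v = u ^ (a + n * (b - a)) • v := by
  refine polyAct_torus _ _ u fun i => ?_
  have hzero : IsWeightedHomogeneous (0 : ι × ι → ℤ) (v i) 0 := fun d _ => by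
    simp [Finsupp.weight_apply]
  have h := isWeightedHomogeneous_add_const hzero (hv i) (b - a)
  simp only [Pi.zero_apply, zero_add, nsmul_eq_mul] at h
  rw [add_sub_cancel_left]
  exact h

/-- The subspace `P` is stable under the twist `α`. -/
def Stabilizes (α : Twist k Ω ι) (P : Submodule (GenericField Ω ι) (ι → GenericField Ω ι)) : Prop :=
  ∀ v ∈ P, genericAct α v ∈ P

variable {α : Twist k Ω ι} {P : Submodule (GenericField Ω ι) (ι → GenericField Ω ι)}
  {v : ι → MvPolynomial (ι × ι) Ω} {n : ℕ}

theorem Stabilizes.polyAct_mem_polynomialVectors (hα : α.Stabilizes P)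
    (hv : v ∈ polynomialVectors Ω (ι × ι) P) : polyAct α v ∈ polynomialVectors Ω (ι × ι) P :=
  (congrArg (· ∈ P) (algebraMap_comp_polyAct α v)).mpr (hα _ hv)

theorem Stabilizes.polyAct_mem_homogeneousVectors (hα : α.Stabilizes P)
    (hv : v ∈ homogeneousVectors Ω (ι × ι) P n) :
    polyAct α v ∈ homogeneousVectors Ω (ι × ι) P n := by
  rw [mem_homogeneousVectors] at hv ⊢
  exact ⟨hα.polyAct_mem_polynomialVectors hv.1, isHomogeneous_polyAct α hv.2⟩

theorem homogeneousComponent_mem_polynomialVectors [Infinite Ω]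
    (hP : ∀ u, (torus (k := k) 0 1 u).Stabilizes P) (hv : v ∈ polynomialVectors Ω (ι × ι) P)
    (n : ℕ) : (fun i => homogeneousComponent n (v i)) ∈ polynomialVectors Ω (ι × ι) P := by
  have hweight : entryWeight (0 : ι → ℤ) 1 = 1 := funext fun _ => sub_zero _
  have h := labelComponent_mem_of_polyAct_torus_mem
    (V := (polynomialVectors Ω (ι × ι) P).restrictScalars Ω)
    (fun u => (hP u).polyAct_mem_polynomialVectors hv) n
  rwa [hweight, ← homogeneousComponent_eq_labelComponent] at h

variable {wa wb : ι → ℤ} {q : ℕ}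

theorem labelComponent_mem_homogeneousVectors [Infinite Ω]
    (hP : ∀ u, (torus (k := k) wa wb u).Stabilizes P) {Λ : Type*} [AddCommGroup Λ] (π : ℤ →+ Λ)
    (l : Λ) (hv : v ∈ homogeneousVectors Ω (ι × ι) P n) :
    labelComponent (π ∘ wa) (entryWeight (π ∘ wa) (π ∘ wb)) l v ∈
      homogeneousVectors Ω (ι × ι) P n := by
  have hweight : entryWeight (π ∘ wa) (π ∘ wb) = π ∘ entryWeight wa wb :=
    funext fun _ => (map_sub π _ _).symm
  rw [hweight]
  exact labelComponent_map_mem (labelComponent_mem_of_polyAct_torus_mem fun u =>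
    (hP u).polyAct_mem_homogeneousVectors hv) π l

/-- A twist which is trivial on scalars acts linearly on vectors of polynomials. -/
def linearAct (α : Twist k Ω ι) (hα : α.scalar = 1) : End Ω (ι → MvPolynomial (ι × ι) Ω) where
  toFun := polyAct α
  map_add' := map_add _
  map_smul' a v := by rw [polyAct_smul, hα]; rfl

theorem polyAct_injective (α : Twist k Ω ι) : Function.Injective (polyAct α) :=
  Function.LeftInverse.injective (g := polyAct α⁻¹) fun v => by
    rw [← polyAct_mul, inv_mul_cancel, polyAct_one]

theorem finrank_homogeneousVectors_eq_mul [Infinite Ω] {Λ : Type*} [AddCommGroup Λ] [Fintype Λ]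
    (π : ℤ →+ Λ) (htorus : ∀ u, (torus (k := k) wa wb u).Stabilizes P)
    (hα : α.Stabilizes P) (hscalar : α.scalar = 1) {ua ub : Λ}
    (hshift : α.ShiftsWeights (π ∘ wa) (π ∘ wb) ua ub)
    (hgen : ∀ l, l ∈ AddSubmonoid.multiples (ua + n • (ub - ua))) :
    finrank Ω (homogeneousVectors Ω (ι × ι) P n) = Fintype.card Λ *
      finrank Ω ((homogeneousVectors Ω (ι × ι) P n).map
        (labelComponent (π ∘ wa) (entryWeight (π ∘ wa) (π ∘ wb)) 0)) := by
  classical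
  let w₀ := π ∘ wa
  let w := entryWeight (π ∘ wa) (π ∘ wb)
  refine finrank_eq_card_mul_finrank_map (shift := linearAct α hscalar)
    (completeOrthogonalIdempotents_labelComponent w₀ w) _
    (fun l _ => labelComponent_mem_homogeneousVectors htorus π l) (polyAct_injective α)
    (fun _ => hα.polyAct_mem_homogeneousVectors) hgen fun l v hv => ?_
  have hlabel (m : Λ) : HasLabel w₀ w (m + (ua + n • (ub - ua)))
      (linearAct α hscalar (labelComponent w₀ w m v)) :=
    hshift.hasLabel_polyAct (mem_homogeneousVectors.1
      (labelComponent_mem_homogeneousVectors htorus π m hv)).2 hasLabel_labelComponent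
  have hsum : ∑ m, labelComponent w₀ w m v = v := by
    simpa using congrArg (· v) (completeOrthogonalIdempotents_labelComponent w₀ w).complete
  conv_rhs => rw [← hsum, map_sum, map_sum]
  simp [(hlabel _).labelComponent_eq, w₀, w]

theorem hasRep_finrank {G : Type*} [Group G] {s : G →* (Ω ≃ₐ[k] Ω)} {c : G → G → Ωˣ}
    {γ : G → Twist k Ω ι} (hscalar : ∀ σ, (γ σ).scalar = s σ) (hone : γ 1 = 1) {a b : ℤ}
    (hmul : ∀ σ τ, γ σ * γ τ = torus (fun _ => a) (fun _ => b) (c σ τ) * γ (σ * τ))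
    {V : Submodule Ω (ι → MvPolynomial (ι × ι) Ω)} [FiniteDimensional Ω V]
    (hV : ∀ v ∈ V, ∀ i, (v i).IsHomogeneous n) (hγ : ∀ σ, ∀ v ∈ V, polyAct (γ σ) v ∈ V) :
    HasRep s c (a + n * (b - a)) (finrank Ω V) := by
  refine HasRep.of_submodule V (fun σ => (polyAct (γ σ)).toAddMonoidHom) hγ
    (fun σ x v _ => ?_) (fun v _ => ?_) fun σ τ v hv => ?_
  · rw [← hscalar]
    exact polyAct_smul _ _ _
  · change polyAct (γ 1) v = v
    rw [hone, polyAct_one]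
  · change polyAct (γ σ) (polyAct (γ τ) v) = _ • polyAct (γ (σ * τ)) v
    rw [← polyAct_mul, hmul, polyAct_mul,
      polyAct_torus_const _ _ _ (isHomogeneous_polyAct _ (hV v hv))]

theorem exists_hasRep_and_finrank_eq [Infinite Ω] {Λ : Type*} [AddCommGroup Λ] [Fintype Λ]
    (π : ℤ →+ Λ) (htorus : ∀ u, (torus (k := k) wa wb u).Stabilizes P)
    (hα : α.Stabilizes P) (hα_scalar : α.scalar = 1) {ua ub : Λ}
    (hα_shift : α.ShiftsWeights (π ∘ wa) (π ∘ wb) ua ub)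
    (hgen : ∀ l, l ∈ AddSubmonoid.multiples (ua + n • (ub - ua)))
    {G : Type*} [Group G] {s : G →* (Ω ≃ₐ[k] Ω)} {c : G → G → Ωˣ} {γ : G → Twist k Ω ι}
    (hγ : ∀ σ, (γ σ).Stabilizes P) (hγ_scalar : ∀ σ, (γ σ).scalar = s σ)
    (hγ_shift : ∀ σ, (γ σ).ShiftsWeights (π ∘ wa) (π ∘ wb) 0 0) (hone : γ 1 = 1) {a b : ℤ}
    (hmul : ∀ σ τ, γ σ * γ τ = torus (fun _ => a) (fun _ => b) (c σ τ) * γ (σ * τ)) :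
    ∃ d, HasRep s c (a + n * (b - a)) d ∧
      finrank Ω (homogeneousVectors Ω (ι × ι) P n) = Fintype.card Λ * d := by
  classical
  let V := homogeneousVectors Ω (ι × ι) P n
  let w₀ := π ∘ wa
  let w := entryWeight (π ∘ wa) (π ∘ wb)
  have hle : V.map (labelComponent w₀ w 0) ≤ V := Submodule.map_le_iff_le_comap.2 fun _ hv =>
    labelComponent_mem_homogeneousVectors htorus π 0 hv
  have hmem {v} (hv : v ∈ V) (hv' : HasLabel w₀ w 0 v) : v ∈ V.map (labelComponent w₀ w 0) :=
    ⟨v, hv, hv'.labelComponent_eq.trans (if_pos rfl)⟩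
  refine ⟨_, hasRep_finrank hγ_scalar hone hmul
    (fun v hv => (mem_homogeneousVectors.1 (hle hv)).2) fun σ v hv => ?_,
    finrank_homogeneousVectors_eq_mul π htorus hα hα_scalar hα_shift hgen⟩
  have hlabel : HasLabel w₀ w 0 v := by
    obtain ⟨v, -, rfl⟩ := hv
    exact hasLabel_labelComponent
  refine hmem ((hγ σ).polyAct_mem_homogeneousVectors (hle hv)) ?_
  simpa using (hγ_shift σ).hasLabel_polyAct (mem_homogeneousVectors.1 (hle hv)).2 hlabel

end Twist

end StableSubspaces

noncomputable section KroneckerFactors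

open scoped Matrix Kronecker

section Factors

variable {R ι₁ ι₂ Λ : Type*} [CommRing R] [Fintype ι₁] [DecidableEq ι₁] [Fintype ι₂]
  [DecidableEq ι₂]

/-- The embedding `A ↦ A ⊗ 1` of a matrix algebra into a larger one. -/
def leftFactor : Matrix ι₁ ι₁ R →ₐ[R] Matrix (ι₁ × ι₂) (ι₁ × ι₂) R :=
  AlgHom.ofLinearMap
    { toFun A := A ⊗ₖ 1
      map_add' A A' := Matrix.add_kronecker A A' 1
      map_smul' a A := Matrix.smul_kronecker a A 1 }
    Matrix.one_kronecker_one fun A A' => by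
      simpa using Matrix.mul_kronecker_mul A A' (1 : Matrix ι₂ ι₂ R) 1

/-- The embedding `B ↦ 1 ⊗ B` of a matrix algebra into a larger one. -/
def rightFactor : Matrix ι₂ ι₂ R →ₐ[R] Matrix (ι₁ × ι₂) (ι₁ × ι₂) R :=
  AlgHom.ofLinearMap
    { toFun B := 1 ⊗ₖ B
      map_add' B B' := Matrix.kronecker_add 1 B B'
      map_smul' b B := Matrix.kronecker_smul b 1 B }
    Matrix.one_kronecker_one fun B B' => by
      simpa using Matrix.mul_kronecker_mul (1 : Matrix ι₁ ι₁ R) 1 B B'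

theorem leftFactor_apply (A : Matrix ι₁ ι₁ R) : leftFactor (ι₂ := ι₂) A = A ⊗ₖ 1 := rfl

theorem rightFactor_apply (B : Matrix ι₂ ι₂ R) : rightFactor (ι₁ := ι₁) B = 1 ⊗ₖ B := rfl

theorem commute_leftFactor_rightFactor (A : Matrix ι₁ ι₁ R) (B : Matrix ι₂ ι₂ R) :
    Commute (leftFactor A) (rightFactor B) := by
  simp [Commute, SemiconjBy, leftFactor_apply, rightFactor_apply, ← Matrix.mul_kronecker_mul]

theorem map_leftFactor {S : Type*} [CommRing S] {F : Type*} [FunLike F R S] [ZeroHomClass F R S]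
    (f : F) (A : Matrix ι₁ ι₁ R) :
    (leftFactor (ι₂ := ι₂) A).map f = leftFactor (A.map f) := by
  ext i j
  simp [leftFactor_apply, Matrix.one_apply, apply_ite f]

theorem map_rightFactor {S : Type*} [CommRing S] {F : Type*} [FunLike F R S] [ZeroHomClass F R S]
    (f : F) (B : Matrix ι₂ ι₂ R) :
    (rightFactor (ι₁ := ι₁) B).map f = rightFactor (B.map f) := by
  ext i j
  simp [rightFactor_apply, Matrix.one_apply, apply_ite f]

theorem leftFactor_diagonal (d : ι₁ → R) :
    leftFactor (ι₂ := ι₂) (Matrix.diagonal d) = Matrix.diagonal (d ∘ Prod.fst) := by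
  rw [leftFactor_apply, ← Matrix.diagonal_one, Matrix.diagonal_kronecker_diagonal]
  simp [Function.comp_def]

theorem rightFactor_diagonal (d : ι₂ → R) :
    rightFactor (ι₁ := ι₁) (Matrix.diagonal d) = Matrix.diagonal (d ∘ Prod.snd) := by
  rw [rightFactor_apply, ← Matrix.diagonal_one, Matrix.diagonal_kronecker_diagonal]
  simp [Function.comp_def]

variable [AddCommGroup Λ]

theorem shiftsWeight_one {ι : Type*} [DecidableEq ι] (w : ι → Λ) :
    ShiftsWeight w 0 (1 : Matrix ι ι R) := fun i j hij => by
  rw [add_zero, not_imp_comm.1 Matrix.one_apply_ne hij]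

theorem ShiftsWeight.leftFactor {w : ι₁ → Λ} {u : Λ} {A : Matrix ι₁ ι₁ R}
    (hA : ShiftsWeight w u A) : ShiftsWeight (w ∘ Prod.fst) u (leftFactor (ι₂ := ι₂) A) :=
  fun _ _ hij => hA _ _ (left_ne_zero_of_mul hij)

theorem ShiftsWeight.rightFactor {w : ι₂ → Λ} {u : Λ} {B : Matrix ι₂ ι₂ R}
    (hB : ShiftsWeight w u B) : ShiftsWeight (w ∘ Prod.snd) u (rightFactor (ι₁ := ι₁) B) :=
  fun _ _ hij => hB _ _ (right_ne_zero_of_mul hij)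

theorem shiftsWeight_leftFactor_zero (w : ι₂ → Λ) (A : Matrix ι₁ ι₁ R) :
    ShiftsWeight (w ∘ Prod.snd) 0 (leftFactor A) := fun _ _ hij =>
  shiftsWeight_one w _ _ (right_ne_zero_of_mul hij)

theorem shiftsWeight_rightFactor_zero (w : ι₁ → Λ) (B : Matrix ι₂ ι₂ R) :
    ShiftsWeight (w ∘ Prod.fst) 0 (rightFactor B) := fun _ _ hij =>
  shiftsWeight_one w _ _ (left_ne_zero_of_mul hij)

/-- The embedding `A ↦ A ⊗ 1` on invertible matrices. -/
def leftFactorUnits : GL ι₁ R →* GL (ι₁ × ι₂) R :=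
  Units.map (leftFactor : _ →ₐ[R] _).toRingHom.toMonoidHom

/-- The embedding `B ↦ 1 ⊗ B` on invertible matrices. -/
def rightFactorUnits : GL ι₂ R →* GL (ι₁ × ι₂) R :=
  Units.map (rightFactor : _ →ₐ[R] _).toRingHom.toMonoidHom

end Factors

section Rotation

variable {n : ℕ} [NeZero n]

variable (n) in
/-- The matrix of the cyclic permutation `i ↦ i + 1` of the standard basis. -/
def rotation (R : Type*) [CommRing R] : GL (Fin n) R :=
  (Matrix.permMatrixHom (n := Fin n) (R := R)).toHomUnits (Equiv.addRight 1)

theorem intCast_val_add_one {q : ℕ} (hq : q ∣ n) (i : Fin n) :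
    ((((i + 1 : Fin n) : ℕ) : ℤ) : ZMod q) = ((i : ℕ) : ℤ) + 1 := by
  rw [Int.cast_natCast, Int.cast_natCast, ← Nat.cast_add_one, ZMod.natCast_eq_natCast_iff,
    Fin.val_add, Fin.val_one']
  exact ((Nat.mod_modEq _ _).trans ((Nat.mod_modEq _ _).add_left _)).of_dvd hq

theorem shiftsWeight_rotation {R : Type*} [CommRing R] {q : ℕ} (hq : q ∣ n) :
    ShiftsWeight (fun i : Fin n => (((i : ℕ) : ℤ) : ZMod q)) 1 (rotation n R).val :=
  fun i j hij => by
  have h : i - 1 = j := by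
    by_contra h
    refine hij ?_
    change (Equiv.addRight (1 : Fin n))⁻¹.permMatrix R i j = 0
    simp [Equiv.Perm.permMatrix, PEquiv.toMatrix_apply, ← sub_eq_add_neg, h]
  rw [← intCast_val_add_one hq, ← h, sub_add_cancel]

theorem shiftsWeight_rotation_inv {R : Type*} [CommRing R] {q : ℕ} (hq : q ∣ n) :
    ShiftsWeight (fun i : Fin n => (((i : ℕ) : ℤ) : ZMod q)) (-1) (rotation n R)⁻¹.val :=
  fun i j hij => by
  have h : i + 1 = j := by
    by_contra h
    refine hij ?_
    change (Equiv.addRight (1 : Fin n))⁻¹⁻¹.permMatrix R i j = 0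
    simp [Equiv.Perm.permMatrix, PEquiv.toMatrix_apply, h]
  change (((i : ℕ) : ℤ) : ZMod q) = ((j : ℕ) : ℤ) + -1
  rw [← h, intCast_val_add_one hq, add_neg_cancel_right]

end Rotation

end KroneckerFactors

noncomputable section IntertwiningTwists

open Module

variable {k Ω G₁ G₂ D₁ D₂ : Type*} [Field k] [Field Ω] [Algebra k Ω] [Group G₁] [Group G₂]
  {s₁ : G₁ →* (Ω ≃ₐ[k] Ω)} {s₂ : G₂ →* (Ω ≃ₐ[k] Ω)} [Ring D₁] [Algebra k D₁] [Ring D₂]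
  [Algebra k D₂] {n₁ n₂ : ℕ}

/-- The twists which commute with the action of `D₁` on column vectors and with the action of `D₂`
on the right of the generic matrix. -/
structure Twist.Intertwines (α : Twist k Ω (Fin n₁ × Fin n₂)) (S₁ : SemilinearSplitting s₁ D₁ n₁)
    (S₂ : SemilinearSplitting s₂ D₂ n₂) : Prop where
  left : ∀ x, α.left.val * (leftFactor (S₁.rep x)).map α.scalar =
    leftFactor (S₁.rep x) * α.left.val
  right : ∀ y, α.right.val * (rightFactor (S₂.rep y)).map α.scalar =
    rightFactor (S₂.rep y) * α.right.val

namespace SemilinearSplitting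

variable (S₁ : SemilinearSplitting s₁ D₁ n₁) (S₂ : SemilinearSplitting s₂ D₂ n₂)

theorem intertwines_rightFactor_leftFactor (A : GL (Fin n₂) Ω) (B : GL (Fin n₁) Ω) :
    (⟨1, rightFactorUnits A, leftFactorUnits B⟩ : Twist k Ω _).Intertwines S₁ S₂ where
  left x := (commute_leftFactor_rightFactor (S₁.rep x) A.val).symm
  right y := commute_leftFactor_rightFactor B.val (S₂.rep y)

theorem intertwines_torus (a : Fin n₂ → ℤ) (b : Fin n₁ → ℤ) (u : Ωˣ) :
    (Twist.torus (a ∘ Prod.snd) (b ∘ Prod.fst) u).Intertwines S₁ S₂ := by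
  have hleft : rightFactorUnits (diagonalUnits fun i => u ^ a i) =
      diagonalUnits fun i : Fin n₁ × Fin n₂ => u ^ a i.2 := Units.ext (rightFactor_diagonal _)
  have hright : leftFactorUnits (diagonalUnits fun i => u ^ b i) =
      diagonalUnits fun i : Fin n₁ × Fin n₂ => u ^ b i.1 := Units.ext (leftFactor_diagonal _)
  have h := intertwines_rightFactor_leftFactor S₁ S₂ (diagonalUnits fun i => u ^ a i)
    (diagonalUnits fun i => u ^ b i)
  rwa [hleft, hright] at h

variable (n₂) in
/-- The twist by `σ` and the matrix `conj σ` acting on the left of the generic matrix. -/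
def leftTwist (σ : G₁) : Twist k Ω (Fin n₁ × Fin n₂) := ⟨s₁ σ, leftFactorUnits (S₁.conj σ), 1⟩

variable (n₁) in
/-- The twist by `τ` and the matrix `conj τ` acting on the right of the generic matrix. -/
def rightTwist (τ : G₂) : Twist k Ω (Fin n₁ × Fin n₂) := ⟨s₂ τ, 1, rightFactorUnits (S₂.conj τ)⟩

theorem intertwines_leftTwist {σ : G₁} (hσ : ∀ y, (S₂.rep y).map (s₁ σ) = S₂.rep y) :
    (S₁.leftTwist n₂ σ).Intertwines S₁ S₂ where
  left x := by
    change leftFactor (S₁.conj σ).val * (leftFactor (S₁.rep x)).map (s₁ σ) =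
      leftFactor (S₁.rep x) * leftFactor (S₁.conj σ).val
    rw [map_leftFactor, ← map_mul, conj_mul_rep, map_mul]
  right y := by
    change 1 * (rightFactor (S₂.rep y)).map (s₁ σ) = rightFactor (S₂.rep y) * 1
    rw [map_rightFactor, hσ, one_mul, mul_one]

theorem intertwines_rightTwist {τ : G₂} (hτ : ∀ x, (S₁.rep x).map (s₂ τ) = S₁.rep x) :
    (S₂.rightTwist n₁ τ).Intertwines S₁ S₂ where
  left x := by
    change 1 * (leftFactor (S₁.rep x)).map (s₂ τ) = leftFactor (S₁.rep x) * 1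
    rw [map_leftFactor, hτ, one_mul, mul_one]
  right y := by
    change rightFactor (S₂.conj τ).val * (rightFactor (S₂.rep y)).map (s₂ τ) =
      rightFactor (S₂.rep y) * rightFactor (S₂.conj τ).val
    rw [map_rightFactor, ← map_mul, conj_mul_rep, map_mul]

theorem shiftsWeights_leftTwist {Λ : Type*} [AddCommGroup Λ] (wa : Fin n₂ → Λ)
    (wb : Fin n₁ × Fin n₂ → Λ) (σ : G₁) :
    (S₁.leftTwist n₂ σ).ShiftsWeights (wa ∘ Prod.snd) wb 0 0 where
  left := shiftsWeight_leftFactor_zero wa _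
  left_inv := by
    rw [neg_zero]
    exact shiftsWeight_leftFactor_zero wa _
  right := shiftsWeight_one wb

theorem shiftsWeights_rightTwist {Λ : Type*} [AddCommGroup Λ] (wa : Fin n₁ × Fin n₂ → Λ)
    (wb : Fin n₁ → Λ) (τ : G₂) :
    (S₂.rightTwist n₁ τ).ShiftsWeights wa (wb ∘ Prod.fst) 0 0 where
  left := shiftsWeight_one wa
  left_inv := by
    rw [neg_zero]
    exact shiftsWeight_one wa
  right := shiftsWeight_rightFactor_zero wb _

theorem leftTwist_one : S₁.leftTwist n₂ 1 = 1 :=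
  Twist.ext (map_one s₁) (by simp [leftTwist, conj_one, Twist.one_left]) rfl

theorem rightTwist_one : S₂.rightTwist n₁ 1 = 1 :=
  Twist.ext (map_one s₂) rfl (by simp [rightTwist, conj_one, Twist.one_right])

theorem leftTwist_mul_leftTwist (σ τ : G₁) : S₁.leftTwist n₂ σ * S₁.leftTwist n₂ τ =
    Twist.torus (fun _ => 1) (fun _ => 0) (S₁.factorSet σ τ) * S₁.leftTwist n₂ (σ * τ) := by
  refine Twist.ext (map_mul s₁ σ τ).symm (Units.ext ?_) ?_
  · change leftFactor (S₁.conj σ).val * (leftFactor (S₁.conj τ).val).map (s₁ σ) =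
      Matrix.diagonal (fun _ => (S₁.factorSet σ τ ^ (1 : ℤ)).val) *
        leftFactor (S₁.conj (σ * τ)).val
    rw [map_leftFactor, ← map_mul, conj_mul_conj, zpow_one, ← Matrix.smul_eq_diagonal_mul]
    exact map_smul leftFactor (S₁.factorSet σ τ).val _
  · change 1 * Matrix.GeneralLinearGroup.map _ 1 =
      diagonalUnits (fun _ => S₁.factorSet σ τ ^ (0 : ℤ)) * Matrix.GeneralLinearGroup.map _ 1
    simp only [map_one, zpow_zero, ← Pi.one_def]

theorem rightTwist_mul_rightTwist (σ τ : G₂) : S₂.rightTwist n₁ σ * S₂.rightTwist n₁ τ =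
    Twist.torus (fun _ => 0) (fun _ => 1) (S₂.factorSet σ τ) * S₂.rightTwist n₁ (σ * τ) := by
  refine Twist.ext (map_mul s₂ σ τ).symm ?_ (Units.ext ?_)
  · change 1 * Matrix.GeneralLinearGroup.map _ 1 =
      diagonalUnits (fun _ => S₂.factorSet σ τ ^ (0 : ℤ)) * Matrix.GeneralLinearGroup.map _ 1
    simp only [map_one, zpow_zero, ← Pi.one_def]
  · change rightFactor (S₂.conj σ).val * (rightFactor (S₂.conj τ).val).map (s₂ σ) =
      Matrix.diagonal (fun _ => (S₂.factorSet σ τ ^ (1 : ℤ)).val) *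
        rightFactor (S₂.conj (σ * τ)).val
    rw [map_rightFactor, ← map_mul, conj_mul_conj, zpow_one, ← Matrix.smul_eq_diagonal_mul]
    exact map_smul rightFactor (S₂.factorSet σ τ).val _

end SemilinearSplitting

end IntertwiningTwists

noncomputable section StableDimension

open Module

theorem isUnit_intCast_zmod {p : ℕ} (hp : p.Prime) (v : ℕ) {m : ℤ} (h : ¬(p : ℤ) ∣ m) :
    IsUnit (m : ZMod (p ^ v)) := by
  rw [ZMod.coe_int_isUnit_iff_isCoprime, Nat.cast_pow]
  exact ((Nat.prime_iff_prime_int.1 hp).coprime_iff_not_dvd.2 h).pow_left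

theorem mem_multiples_of_isUnit {q : ℕ} [NeZero q] {u : ZMod q} (hu : IsUnit u) (l : ZMod q) :
    l ∈ AddSubmonoid.multiples u := by
  obtain ⟨u, rfl⟩ := hu
  exact ⟨(l * ↑u⁻¹ : ZMod q).val, by simp⟩

namespace SemilinearSplitting

variable {k Ω G₁ G₂ D₁ D₂ : Type*} [Field k] [Field Ω] [Algebra k Ω] [Group G₁] [Group G₂]
  {s₁ : G₁ →* (Ω ≃ₐ[k] Ω)} {s₂ : G₂ →* (Ω ≃ₐ[k] Ω)} [Ring D₁] [Algebra k D₁] [Ring D₂]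
  [Algebra k D₂] {n₁ n₂ : ℕ} [Infinite Ω]
  {S₁ : SemilinearSplitting s₁ D₁ n₁} {S₂ : SemilinearSplitting s₂ D₂ n₂}
  {P : Submodule (GenericField Ω (Fin n₁ × Fin n₂))
    (Fin n₁ × Fin n₂ → GenericField Ω (Fin n₁ × Fin n₂))}
  {p m : ℕ}

theorem prime_pow_mul_dvd_of_dvd [NeZero n₂] (hS₁ : S₁.HasFullIndex)
    (h₁₂ : ∀ σ y, (S₂.rep y).map (s₁ σ) = S₂.rep y)
    (hP : ∀ α : Twist k Ω _, α.Intertwines S₁ S₂ → α.Stabilizes P) (hp : p.Prime) (hpm : p ∣ m) :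
    p ^ n₂.factorization p * p ^ n₁.factorization p ∣
      finrank Ω (homogeneousVectors Ω ((Fin n₁ × Fin n₂) × Fin n₁ × Fin n₂) P m) := by
  let q := p ^ n₂.factorization p
  have : NeZero q := ⟨pow_ne_zero _ hp.ne_zero⟩
  let w (i : Fin n₂) : ℤ := (i : ℕ)
  have hq : q ∣ n₂ := Nat.ordProj_dvd n₂ p
  have hpm' : ¬(p : ℤ) ∣ 1 + m * (0 - 1) := fun h => by
    rw [dvd_add_left (Dvd.dvd.mul_right (Int.natCast_dvd_natCast.2 hpm) _)] at h
    exact (Nat.prime_iff_prime_int.1 hp).not_dvd_one h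
  let rotate : Twist k Ω (Fin n₁ × Fin n₂) := ⟨1, rightFactorUnits (rotation n₂ Ω), 1⟩
  have hrotate : rotate.Intertwines S₁ S₂ := by
    simpa using intertwines_rightFactor_leftFactor S₁ S₂ (rotation n₂ Ω) 1
  obtain ⟨d, hd, hfinrank⟩ := Twist.exists_hasRep_and_finrank_eq (n := m)
    (wa := w ∘ Prod.snd) (wb := 0) (Int.castAddHom (ZMod q))
    (fun u => hP _ (intertwines_torus S₁ S₂ _ 0 u)) (hP _ hrotate) rfl (ua := 1) (ub := 0)
    ⟨(shiftsWeight_rotation hq).rightFactor, (shiftsWeight_rotation_inv hq).rightFactor,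
      shiftsWeight_one _⟩
    (mem_multiples_of_isUnit (by simpa using isUnit_intCast_zmod hp _ hpm'))
    (fun σ => hP _ (intertwines_leftTwist S₁ S₂ (h₁₂ σ))) (fun _ => rfl)
    (S₁.shiftsWeights_leftTwist (Int.castAddHom (ZMod q) ∘ w) _)
    S₁.leftTwist_one S₁.leftTwist_mul_leftTwist
  rw [hfinrank, ZMod.card]
  exact mul_dvd_mul_left q (hS₁ hp hpm' hd)

theorem prime_pow_mul_dvd_of_not_dvd [NeZero n₁] (hS₂ : S₂.HasFullIndex)
    (h₂₁ : ∀ τ x, (S₁.rep x).map (s₂ τ) = S₁.rep x)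
    (hP : ∀ α : Twist k Ω _, α.Intertwines S₁ S₂ → α.Stabilizes P) (hp : p.Prime) (hpm : ¬p ∣ m) :
    p ^ n₁.factorization p * p ^ n₂.factorization p ∣
      finrank Ω (homogeneousVectors Ω ((Fin n₁ × Fin n₂) × Fin n₁ × Fin n₂) P m) := by
  let q := p ^ n₁.factorization p
  have : NeZero q := ⟨pow_ne_zero _ hp.ne_zero⟩
  let w (i : Fin n₁) : ℤ := (i : ℕ)
  have hq : q ∣ n₁ := Nat.ordProj_dvd n₁ p
  have hpm' : ¬(p : ℤ) ∣ 0 + m * (1 - 0) := by simpa [Int.natCast_dvd_natCast] using hpm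
  let rotate : Twist k Ω (Fin n₁ × Fin n₂) := ⟨1, 1, leftFactorUnits (rotation n₁ Ω)⟩
  have hrotate : rotate.Intertwines S₁ S₂ := by
    simpa using intertwines_rightFactor_leftFactor S₁ S₂ 1 (rotation n₁ Ω)
  obtain ⟨d, hd, hfinrank⟩ := Twist.exists_hasRep_and_finrank_eq (n := m)
    (wa := 0) (wb := w ∘ Prod.fst) (Int.castAddHom (ZMod q))
    (fun u => hP _ (intertwines_torus S₁ S₂ 0 _ u)) (hP _ hrotate) rfl (ua := 0) (ub := 1)
    ⟨shiftsWeight_one _, by rw [neg_zero]; exact shiftsWeight_one _,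
      (shiftsWeight_rotation hq).leftFactor⟩
    (mem_multiples_of_isUnit (by simpa using isUnit_intCast_zmod hp _ hpm'))
    (fun τ => hP _ (intertwines_rightTwist S₁ S₂ (h₂₁ τ))) (fun _ => rfl)
    (S₂.shiftsWeights_rightTwist _ (Int.castAddHom (ZMod q) ∘ w))
    S₂.rightTwist_one S₂.rightTwist_mul_rightTwist
  rw [hfinrank, ZMod.card]
  exact mul_dvd_mul_left q (hS₂ hp hpm' hd)

theorem mul_dvd_finrank [NeZero n₁] [NeZero n₂] (hS₁ : S₁.HasFullIndex) (hS₂ : S₂.HasFullIndex)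
    (h₁₂ : ∀ σ y, (S₂.rep y).map (s₁ σ) = S₂.rep y)
    (h₂₁ : ∀ τ x, (S₁.rep x).map (s₂ τ) = S₁.rep x)
    (hP : ∀ α : Twist k Ω _, α.Intertwines S₁ S₂ → α.Stabilizes P) :
    n₁ * n₂ ∣ finrank (GenericField Ω (Fin n₁ × Fin n₂)) P := by
  refine dvd_finrank_of_dvd_finrank_homogeneousVectors Ω (fun v hv =>
    Twist.homogeneousComponent_mem_polynomialVectors
      (fun u => hP _ (intertwines_torus S₁ S₂ 0 1 u)) hv) fun m => ?_
  refine (Nat.dvd_iff_prime_pow_dvd_dvd _ _).2 fun p e hp he => ?_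
  have hn : n₁ * n₂ ≠ 0 := mul_ne_zero (NeZero.ne n₁) (NeZero.ne n₂)
  have he' : p ^ e ∣ p ^ n₁.factorization p * p ^ n₂.factorization p := by
    rw [← pow_add, ← Finsupp.add_apply, ← Nat.factorization_mul (NeZero.ne n₁) (NeZero.ne n₂)]
    exact pow_dvd_pow p ((hp.pow_dvd_iff_le_factorization hn).1 he)
  by_cases hpm : p ∣ m
  · exact he'.trans (mul_comm (p ^ _) (p ^ _) ▸ prime_pow_mul_dvd_of_dvd hS₁ h₁₂ hP hp hpm)
  · exact he'.trans (prime_pow_mul_dvd_of_not_dvd hS₂ h₂₁ hP hp hpm)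

end SemilinearSplitting

end StableDimension

noncomputable section GenericCommutant

open Module
open scoped Matrix

/-- The embedding into a commutant of a matrix representation whose matrices commute with a family
of semilinear maps. -/
def toCommutant {k F Γ ι D : Type*} [Field k] [Field F] [Algebra k F] [Fintype ι] [DecidableEq ι]
    [Ring D] [Algebra k D] {φ : Γ → F →ₐ[k] F} {A : Γ → Matrix ι ι F} (r : D →ₐ[k] Matrix ι ι F)
    (h : ∀ x γ, r x * A γ = A γ * (r x).map (φ γ)) :
    D →ₐ[k] commutant fun γ => semilinearMulVec (φ γ) (A γ) :=
  (((Matrix.toLinAlgEquiv' : Matrix ι ι F ≃ₐ[F] _).toAlgHom.restrictScalars k).comp r).codRestrict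
    _ fun x γ v => by
      change r x *ᵥ (A γ *ᵥ (φ γ ∘ v)) = A γ *ᵥ (φ γ ∘ (r x *ᵥ v))
      have hmap : φ γ ∘ (r x *ᵥ v) = (r x).map (φ γ) *ᵥ (φ γ ∘ v) :=
        funext ((φ γ : F →+* F).map_mulVec (r x) v)
      rw [hmap, Matrix.mulVec_mulVec, Matrix.mulVec_mulVec, h]

universe u

variable {k G₁ G₂ D₁ D₂ : Type*} {Ω : Type u} [Field k] [Field Ω] [Algebra k Ω] [Group G₁]
  [Group G₂] {s₁ : G₁ →* (Ω ≃ₐ[k] Ω)} {s₂ : G₂ →* (Ω ≃ₐ[k] Ω)} [Ring D₁] [Algebra k D₁] [Ring D₂]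
  [Algebra k D₂] {n₁ n₂ : ℕ} (S₁ : SemilinearSplitting s₁ D₁ n₁)
  (S₂ : SemilinearSplitting s₂ D₂ n₂)

theorem map_algebraMap_map_genericSubst {ι : Type*} [Fintype ι] [DecidableEq ι]
    (α : Twist k Ω ι) (M : Matrix ι ι Ω) :
    (M.map (algebraMap Ω (GenericField Ω ι))).map (α.genericSubst) =
      (M.map α.scalar).map (algebraMap _ _) :=
  Matrix.ext fun _ _ => α.genericSubst_algebraMap _

namespace SemilinearSplitting

variable (n₂) in
/-- The representation of `D₁` on column vectors over the generic field. -/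
def genericLeftRep : D₁ →ₐ[k] Matrix (Fin n₁ × Fin n₂) (Fin n₁ × Fin n₂)
    (GenericField Ω (Fin n₁ × Fin n₂)) :=
  (((Algebra.ofId Ω _).mapMatrix.comp leftFactor).restrictScalars k).comp S₁.rep

variable (n₁) in
/-- The representation of `D₂` on column vectors over the generic field, obtained by conjugation
with the generic matrix. -/
def genericRightRep : D₂ →ₐ[k] Matrix (Fin n₁ × Fin n₂) (Fin n₁ × Fin n₂)
    (GenericField Ω (Fin n₁ × Fin n₂)) :=
  (MulSemiringAction.toAlgHom k _ (ConjAct.toConjAct (genericMatrix Ω (Fin n₁ × Fin n₂)))).comp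
    ((((Algebra.ofId Ω _).mapMatrix.comp rightFactor).restrictScalars k).comp S₂.rep)

variable {S₁ S₂} {α : Twist k Ω (Fin n₁ × Fin n₂)}

theorem genericLeftRep_mul (hα : α.Intertwines S₁ S₂) (x : D₁) :
    S₁.genericLeftRep n₂ x * α.left.val.map (algebraMap _ _) =
      α.left.val.map (algebraMap _ _) * (S₁.genericLeftRep n₂ x).map α.genericSubst := by
  change (leftFactor (S₁.rep x)).map (algebraMap _ _) * _ =
    _ * ((leftFactor (S₁.rep x)).map (algebraMap _ _)).map α.genericSubst
  rw [map_algebraMap_map_genericSubst, ← Matrix.map_mul, ← Matrix.map_mul, hα.left]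

theorem genericRightRep_mul (hα : α.Intertwines S₁ S₂) (y : D₂) :
    S₂.genericRightRep n₁ y * α.left.val.map (algebraMap _ _) =
      α.left.val.map (algebraMap _ _) * (S₂.genericRightRep n₁ y).map α.genericSubst := by
  let g := genericMatrix Ω (Fin n₁ × Fin n₂)
  let R := (rightFactor (ι₁ := Fin n₁) (S₂.rep y)).map
    (algebraMap Ω (GenericField Ω (Fin n₁ × Fin n₂)))
  let A := α.left.map (algebraMap Ω (GenericField Ω (Fin n₁ × Fin n₂)))
  let B := α.right.map (algebraMap Ω (GenericField Ω (Fin n₁ × Fin n₂)))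
  have hR : B.val * R.map α.genericSubst = R * B.val := by
    change _ * ((rightFactor (S₂.rep y)).map (algebraMap _ _)).map α.genericSubst = _
    rw [map_algebraMap_map_genericSubst]
    exact (Matrix.map_mul ..).symm.trans
      ((congrArg (Matrix.map · _) (hα.right y)).trans (Matrix.map_mul ..))
  have hg : g.map (α.genericSubst : _ →+* _) = A⁻¹ * g * B :=
    Units.ext (Twist.map_genericSubst_genericMatrix α)
  change g.val * R * g⁻¹.val * A.val = A.val * (g.val * R * g⁻¹.val).map α.genericSubst
  have hmap : (g.val * R * g⁻¹.val).map α.genericSubst =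
      (A⁻¹ * g * B).val * R.map α.genericSubst * (A⁻¹ * g * B)⁻¹.val := by
    rw [← hg, Matrix.map_mul, Matrix.map_mul]
    rfl
  rw [hmap]
  simp only [Units.val_mul, mul_inv_rev, inv_inv, mul_assoc, Units.mul_inv_cancel_left]
  rw [← mul_assoc B.val, hR, mul_assoc R, Units.mul_inv_cancel_left]

theorem exists_common_embedding [NeZero n₁] [NeZero n₂] [Infinite Ω] (hS₁ : S₁.HasFullIndex)
    (hS₂ : S₂.HasFullIndex) (h₁₂ : ∀ σ y, (S₂.rep y).map (s₁ σ) = S₂.rep y)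
    (h₂₁ : ∀ τ x, (S₁.rep x).map (s₂ τ) = S₁.rep x) :
    ∃ (E : Type u) (_ : DivisionRing E) (_ : Algebra k E),
      Module.Finite (Subring.center E) E ∧ Nonempty (D₁ →ₐ[k] E) ∧ Nonempty (D₂ →ₐ[k] E) := by
  let T (α : {α : Twist k Ω _ // α.Intertwines S₁ S₂}) := α.val.genericAct
  have hdiv : ∀ f : commutant T, IsUnit f ∨ f = 0 :=
    isUnit_or_eq_zero_of_mem_commutant fun P hP => by
      rw [finrank_fintype_fun_eq_card, Fintype.card_prod, Fintype.card_fin, Fintype.card_fin]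
      exact mul_dvd_finrank hS₁ hS₂ h₁₂ h₂₁ fun α hα => hP ⟨α, hα⟩
  let E : DivisionRing (commutant T) := DivisionRing.ofIsUnitOrEqZero hdiv
  exact ⟨commutant T, E, inferInstance,
    finite_center_commutant hdiv fun α => α.val.genericAct_surjective,
    ⟨toCommutant (S₁.genericLeftRep n₂) fun x α => genericLeftRep_mul α.2 x⟩,
    ⟨toCommutant (S₂.genericRightRep n₁) fun y α => genericRightRep_mul α.2 y⟩⟩

end SemilinearSplitting

end GenericCommutant

noncomputable section Ultrapowers

open Filter
open scoped TensorProduct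

variable {k : Type*} [Field k]

/-- The algebra of germs, in which scalars are germs of constant functions. -/
instance germAlgebra {I R : Type*} [CommRing R] [Algebra k R] (l : Filter I) :
    Algebra k (Germ l R) where
  algebraMap := (Germ.coeRingHom l).comp (algebraMap k (I → R))
  commutes' _ _ := mul_comm _ _
  smul_def' a x := Germ.inductionOn x fun _ =>
    congrArg Germ.ofFun (funext fun _ => Algebra.smul_def a _)

/-- Composition of germs with an algebra homomorphism. -/
def germMap {I R S : Type*} [CommRing R] [Algebra k R] [CommRing S] [Algebra k S] (l : Filter I)
    (f : R →ₐ[k] S) : Germ l R →ₐ[k] Germ l S where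
  toFun := Germ.map f
  map_one' := congrArg Germ.ofFun (funext fun _ => map_one f)
  map_mul' x y := Germ.inductionOn₂ x y fun _ _ =>
    congrArg Germ.ofFun (funext fun _ => map_mul f _ _)
  map_zero' := congrArg Germ.ofFun (funext fun _ => map_zero f)
  map_add' x y := Germ.inductionOn₂ x y fun _ _ =>
    congrArg Germ.ofFun (funext fun _ => map_add f _ _)
  commutes' a := congrArg Germ.ofFun (funext fun _ => f.commutes a)

/-- The embedding of an algebra into its germs by constant functions. -/
def germConst {I : Type*} (R : Type*) [CommRing R] [Algebra k R] (l : Filter I) :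
    R →ₐ[k] Germ l R where
  toRingHom := (Germ.coeRingHom l).comp (Pi.constRingHom I R)
  commutes' _ := rfl

variable {I L M : Type*} [CommRing L] [Algebra k L] [CommRing M] [Algebra k M]

variable (L) in
/-- The homomorphism from `L ⊗ M` to the germs of functions with values in `L` induced by a
homomorphism from `M` to the germs of functions with values in `k`. -/
def tensorToGerm {l : Filter I} (j : M →ₐ[k] Germ l k) : L ⊗[k] M →ₐ[k] Germ l L :=
  Algebra.TensorProduct.lift (germConst L l) ((germMap l (Algebra.ofId k L)).comp j)
    fun _ _ => Commute.all _ _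

theorem tensorToGerm_tmul {l : Filter I} (j : M →ₐ[k] Germ l k) (x : L) (y : M) :
    tensorToGerm L j (x ⊗ₜ y) = (x : Germ l L) * germMap l (Algebra.ofId k L) (j y) :=
  Algebra.TensorProduct.lift_tmul (germConst L l) ((germMap l (Algebra.ofId k L)).comp j)
    (fun _ _ => Commute.all _ _) x y

theorem tensorToGerm_congr {l : Filter I} (j : M →ₐ[k] Germ l k) (σ : L ≃ₐ[k] L) (z : L ⊗[k] M) :
    tensorToGerm L j (Algebra.TensorProduct.congr σ .refl z) =
      germMap l (σ : L →ₐ[k] L) (tensorToGerm L j z) := by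
  induction z with
  | zero => simp only [map_zero]
  | add z z' hz hz' => simp only [map_add, hz, hz']
  | tmul x y =>
    have hfix (g : Germ l k) : germMap l (σ : L →ₐ[k] L) (germMap l (Algebra.ofId k L) g) =
        germMap l (Algebra.ofId k L) g :=
      Germ.inductionOn g fun _ => congrArg Germ.ofFun (funext fun _ => σ.commutes _)
    rw [Algebra.TensorProduct.congr_apply, Algebra.TensorProduct.map_tmul, tensorToGerm_tmul,
      tensorToGerm_tmul, map_mul, hfix]
    rfl

theorem tensorToGerm_injective {l : Filter I} {j : M →ₐ[k] Germ l k}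
    (hj : Function.Injective j) : Function.Injective (tensorToGerm L j) := by
  classical
  refine (injective_iff_map_eq_zero _).2 fun x hx => ?_
  let e := Module.Basis.ofVectorSpace k L
  let Φ := TensorProduct.equivFinsuppOfBasisLeft (N := M) e
  obtain ⟨y, rfl⟩ := Φ.symm.surjective x
  choose f hf using fun i => Quotient.exists_rep (j (y i))
  have hterm (i) : tensorToGerm L j (e i ⊗ₜ y i) = ((fun t => f i t • e i : I → L) : Germ l L) := by
    rw [tensorToGerm_tmul, ← hf i]
    exact congrArg Germ.ofFun (funext fun t => (mul_comm _ _).trans (Algebra.smul_def _ _).symm)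
  have hsum : tensorToGerm L j (Φ.symm y) =
      ((fun t => ∑ i ∈ y.support, f i t • e i : I → L) : Germ l L) := by
    rw [TensorProduct.equivFinsuppOfBasisLeft_symm_apply, Finsupp.sum, map_sum,
      Finset.sum_congr rfl fun i _ => hterm i]
    refine (map_sum (Germ.coeRingHom l) _ _).symm.trans (congrArg Germ.ofFun (funext fun t => ?_))
    exact Finset.sum_apply ..
  have hzero : ∀ᶠ t in l, ∑ i ∈ y.support, f i t • e i = 0 := Germ.coe_eq.1 (hsum.symm.trans hx)
  have hy : y = 0 := Finsupp.ext fun i => by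
    by_contra hi
    refine hi (hj ((hf i).symm.trans ((Germ.coe_eq.2 (hzero.mono fun t ht => ?_)).trans
      (map_zero j).symm)))
    exact linearIndependent_iff'.1 e.linearIndependent _ _ ht i (Finsupp.mem_support_iff.2 hi)
  rw [hy, map_zero]

variable [IsAlgClosed k]

variable (k) in
theorem nonempty_algHom_of_finiteType (A : Type*) [CommRing A] [Nontrivial A] [Algebra k A]
    [Algebra.FiniteType k A] : Nonempty (A →ₐ[k] k) := by
  obtain ⟨m, hm⟩ := Ideal.exists_maximal A
  let _ : Field (A ⧸ m) := Ideal.Quotient.field m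
  have : Module.Finite k (A ⧸ m) := finite_of_finite_type_of_isJacobsonRing k (A ⧸ m)
  have hb : Function.Bijective (Algebra.ofId k (A ⧸ m)) :=
    IsAlgClosed.algebraMap_bijective_of_isIntegral
  exact ⟨(AlgEquiv.ofBijective _ hb).symm.toAlgHom.comp (Ideal.Quotient.mkₐ k m)⟩

-- Choose a `k`-point of the subalgebra generated by each finite set `s`; these points become
-- compatible along an ultrafilter that contains all the sets `{s | t ⊆ s}`.
variable (k) in
theorem exists_algHom_germ (A : Type*) [CommRing A] [Nontrivial A] [Algebra k A] :
    ∃ U : Ultrafilter (Finset A), Nonempty (A →ₐ[k] Germ (U : Filter (Finset A)) k) := by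
  classical
  have hpoint (s : Finset A) : Nonempty (Algebra.adjoin k (s : Set A) →ₐ[k] k) :=
    have : Algebra.FiniteType k (Algebra.adjoin k (s : Set A)) :=
      ⟨(Subalgebra.fg_top _).mpr ⟨s, rfl⟩⟩
    nonempty_algHom_of_finiteType k _
  let χ (s : Finset A) : Algebra.adjoin k (s : Set A) →ₐ[k] k := (hpoint s).some
  let ev (x : A) (s : Finset A) : k :=
    if hx : x ∈ Algebra.adjoin k (s : Set A) then χ s ⟨x, hx⟩ else 0
  have hev {x : A} {s : Finset A} (hx : x ∈ Algebra.adjoin k (s : Set A)) :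
      ev x s = χ s ⟨x, hx⟩ := dif_pos hx
  let U : Ultrafilter (Finset A) := Ultrafilter.of atTop
  have hmem (x : A) : ∀ᶠ s : Finset A in U, x ∈ Algebra.adjoin k (s : Set A) :=
    Ultrafilter.of_le _ <| (eventually_ge_atTop {x}).mono fun s hs =>
      Algebra.subset_adjoin (hs (Finset.mem_singleton_self x))
  have hconst (a : k) (s : Finset A) : ev (algebraMap k A a) s = a :=
    (hev (algebraMap_mem _ a)).trans ((χ s).commutes a)
  refine ⟨U, ⟨{
    toFun x := (ev x : Germ (U : Filter (Finset A)) k)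
    map_one' := congrArg Germ.ofFun (funext fun s => by simpa using hconst 1 s)
    map_mul' x y := Germ.coe_eq.2 ?_
    map_zero' := congrArg Germ.ofFun (funext fun s => by simpa using hconst 0 s)
    map_add' x y := Germ.coe_eq.2 ?_
    commutes' a := congrArg Germ.ofFun (funext (hconst a)) }⟩⟩
  · filter_upwards [hmem x, hmem y] with s hx hy
    change ev (x * y) s = ev x s * ev y s
    rw [hev (mul_mem hx hy), hev hx, hev hy, ← map_mul]
    rfl
  · filter_upwards [hmem x, hmem y] with s hx hy
    change ev (x + y) s = ev x s + ev y s
    rw [hev (add_mem hx hy), hev hx, hev hy, ← map_add]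
    rfl

end Ultrapowers

noncomputable section BaseChange

open Filter

theorem HasRep.of_germ {k k' Ω L G I : Type*} [CommRing k] [Field Ω] [Algebra k Ω] [CommRing k']
    [Field L] [Algebra k' L] [Group G] [Finite G] {s : G →* (Ω ≃ₐ[k] Ω)} {s' : G →* (L ≃ₐ[k'] L)}
    {c : G → G → Ωˣ} {c' : G → G → Lˣ} {U : Ultrafilter I} (φ : Ω →+* Germ (U : Filter I) L)
    (hφ : ∀ σ x, φ (s σ x) = (φ x).map (s' σ))
    (hc : ∀ σ τ, φ (c σ τ) = (↑(c' σ τ : L) : Germ (U : Filter I) L)) {t : ℤ} {d : ℕ}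
    (h : HasRep s c t d) : HasRep s' c' t d := by
  obtain ⟨A, hA1, hA⟩ := h
  choose a ha using fun σ i j => Quotient.exists_rep (φ (A σ i j))
  have hone (i j) : ∀ᶠ x in (U : Filter I), a 1 i j x = (1 : Matrix (Fin d) (Fin d) L) i j := by
    refine Germ.coe_eq.1 ((ha 1 i j).trans ?_)
    rw [hA1, Matrix.one_apply, Matrix.one_apply, apply_ite φ, map_one, map_zero]
    split_ifs <;> rfl
  have hcoc (σ τ) : φ (c σ τ ^ t : Ωˣ) = (↑(c' σ τ ^ t : Lˣ).val : Germ (U : Filter I) L) := by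
    rw [Units.val_zpow_eq_zpow_val, map_zpow₀, hc, Units.val_zpow_eq_zpow_val]
    exact (map_zpow₀ ((Germ.coeRingHom (U : Filter I)).comp (Pi.constRingHom I L)) _ _).symm
  have hmul (σ τ i l) : ∀ᶠ x in U,
      ∑ j, a σ i j x * s' σ (a τ j l x) = (c' σ τ ^ t : Lˣ) * a (σ * τ) i l x := by
    refine Germ.coe_eq.1 ?_
    have h := congrArg φ (congrFun₂ (hA σ τ) i l)
    rw [Matrix.mul_apply, map_sum, Matrix.smul_apply, Units.smul_def, smul_eq_mul, map_mul, hcoc]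
      at h
    simp only [map_mul, Matrix.map_apply, hφ, ← ha] at h
    refine Eq.trans ?_ h
    refine Eq.trans (congrArg Germ.ofFun (funext fun x => ?_))
      (map_sum (Germ.coeRingHom _) (fun j x => a σ i j x * s' σ (a τ j l x)) _)
    exact (Finset.sum_apply x _ fun j x => a σ i j x * s' σ (a τ j l x)).symm
  have hall : ∀ᶠ x in U, (∀ i j, a 1 i j x = (1 : Matrix (Fin d) (Fin d) L) i j) ∧
      ∀ σ τ i l, ∑ j, a σ i j x * s' σ (a τ j l x) = (c' σ τ ^ t : Lˣ) * a (σ * τ) i l x := by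
    simp only [eventually_and, eventually_all]
    exact ⟨hone, hmul⟩
  obtain ⟨x, hx1, hx⟩ := hall.exists
  exact ⟨fun σ => Matrix.of fun i j => a σ i j x, Matrix.ext hx1, fun σ τ => Matrix.ext (hx σ τ)⟩

namespace SemilinearSplitting

variable {k K L Ω G D : Type*} [CommRing k] [Field K] [Field L] [Field Ω] [Algebra k K]
  [Algebra k L] [Algebra K L] [IsScalarTower k K L] [Algebra k Ω] [Group G] [Ring D] [Algebra k D]
  [Algebra K D] [IsScalarTower k K D] {s : G →* (L ≃ₐ[K] L)} {s' : G →* (Ω ≃ₐ[k] Ω)} {n : ℕ}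

/-- The extension of a splitting along an equivariant embedding of fields. -/
def baseChange (S : SemilinearSplitting s D n) (j : L →ₐ[k] Ω)
    (hj : ∀ σ x, s' σ (j x) = j (s σ x)) : SemilinearSplitting s' D n where
  rep := j.mapMatrix.comp (S.rep.restrictScalars k)
  conj σ := Matrix.GeneralLinearGroup.map (j : L →+* Ω) (S.conj σ)
  factorSet σ τ := Units.map j (S.factorSet σ τ)
  conj_one := by rw [S.conj_one, map_one]
  conj_mul_rep σ x := by
    have hmap : ((S.rep x).map j).map (s' σ) = ((S.rep x).map (s σ)).map j :=
      Matrix.ext fun _ _ => hj _ _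
    change (S.conj σ).val.map j * ((S.rep x).map j).map (s' σ) =
      (S.rep x).map j * (S.conj σ).val.map j
    rw [hmap, ← Matrix.map_mul, S.conj_mul_rep, Matrix.map_mul]
  conj_mul_conj σ τ := by
    have hmap : ((S.conj τ).val.map j).map (s' σ) = ((S.conj τ).val.map (s σ)).map j :=
      Matrix.ext fun _ _ => hj _ _
    change (S.conj σ).val.map j * ((S.conj τ).val.map j).map (s' σ) = _
    rw [hmap, ← Matrix.map_mul, S.conj_mul_conj]
    exact Matrix.ext fun _ _ => map_mul j _ _

theorem HasFullIndex.baseChange [Finite G] {S : SemilinearSplitting s D n} (hS : S.HasFullIndex)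
    {j : L →ₐ[k] Ω} (hj : ∀ σ x, s' σ (j x) = j (s σ x)) {I : Type*} {U : Ultrafilter I}
    (φ : Ω →+* Germ (U : Filter I) L) (hφ : ∀ σ x, φ (s' σ x) = (φ x).map (s σ))
    (hφj : ∀ x, φ (j x) = (x : Germ (U : Filter I) L)) : (S.baseChange j hj).HasFullIndex :=
  fun _ hp _ hpt _ h => hS hp hpt (h.of_germ φ hφ fun _ _ => hφj _)

end SemilinearSplitting

end BaseChange

noncomputable section TensorFractionField

open Filter
open scoped TensorProduct

variable {k : Type*} [Field k]

theorem lift_fieldEquivOfAlgEquiv {R F : Type*} [CommRing R] [IsDomain R] [Algebra k R] [Field F]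
    [Algebra k F] {ψ : R →ₐ[k] F} (hψ : Function.Injective ψ) (σ : R ≃ₐ[k] R) (τ : F →ₐ[k] F)
    (h : ∀ x, ψ (σ x) = τ (ψ x)) (z : FractionRing R) :
    IsFractionRing.liftAlgHom hψ
        (IsFractionRing.fieldEquivOfAlgEquiv k (FractionRing R) (FractionRing R) σ z) =
      τ (IsFractionRing.liftAlgHom (K := FractionRing R) hψ z) := by
  obtain ⟨a, b, -, rfl⟩ := IsFractionRing.div_surjective (A := R) z
  simp [h]

variable [IsAlgClosed k] {L M : Type*} [Field L] [Algebra k L] [Field M] [Algebra k M]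

instance isDomain_tensorProduct : IsDomain (L ⊗[k] M) := by
  obtain ⟨U, ⟨j⟩⟩ := exists_algHom_germ k M
  have hj := tensorToGerm_injective (L := L) j.toRingHom.injective
  exact hj.isDomain (tensorToGerm L j).toRingHom

variable (k L M) in
/-- The field of fractions of `L ⊗ M`, in which `L` and `M` are independent over `k`. -/
abbrev TensorFractionField : Type _ := FractionRing (L ⊗[k] M)

namespace TensorFractionField

variable (k L M) in
/-- The embedding of the first factor. -/
def inl : L →ₐ[k] TensorFractionField k L M :=
  (IsScalarTower.toAlgHom k (L ⊗[k] M) _).comp Algebra.TensorProduct.includeLeft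

variable (k L M) in
/-- The embedding of the second factor. -/
def inr : M →ₐ[k] TensorFractionField k L M :=
  (IsScalarTower.toAlgHom k (L ⊗[k] M) _).comp Algebra.TensorProduct.includeRight

variable (L) in
/-- The automorphism of `L ⊗ M` induced by automorphisms of the factors. -/
def congr : (L ≃ₐ[k] L) × (M ≃ₐ[k] M) →*
    (TensorFractionField k L M ≃ₐ[k] TensorFractionField k L M) :=
  (IsFractionRing.fieldEquivOfAlgEquivHom k _).comp
    { toFun σ := Algebra.TensorProduct.congr σ.1 σ.2
      map_one' := Algebra.TensorProduct.congr_refl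
      map_mul' _ _ := Algebra.TensorProduct.congr_trans .. }

theorem congr_algebraMap (σ : (L ≃ₐ[k] L) × (M ≃ₐ[k] M)) (x : L ⊗[k] M) :
    congr L σ (algebraMap _ _ x) = algebraMap _ _ (Algebra.TensorProduct.congr σ.1 σ.2 x) :=
  IsFractionRing.fieldEquivOfAlgEquiv_algebraMap ..

theorem congr_inl (σ : (L ≃ₐ[k] L) × (M ≃ₐ[k] M)) (x : L) :
    congr L σ (inl k L M x) = inl k L M (σ.1 x) := by
  refine (congr_algebraMap σ (x ⊗ₜ 1)).trans (congrArg (algebraMap _ _) ?_)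
  rw [Algebra.TensorProduct.congr_apply, Algebra.TensorProduct.map_tmul, map_one]
  rfl

theorem congr_inr (σ : (L ≃ₐ[k] L) × (M ≃ₐ[k] M)) (y : M) :
    congr L σ (inr k L M y) = inr k L M (σ.2 y) := by
  refine (congr_algebraMap σ (1 ⊗ₜ y)).trans (congrArg (algebraMap _ _) ?_)
  rw [Algebra.TensorProduct.congr_apply, Algebra.TensorProduct.map_tmul, map_one]
  rfl

instance : Infinite (TensorFractionField k L M) :=
  have : Infinite k := IsAlgClosed.instInfinite
  Infinite.of_injective _ (algebraMap k (TensorFractionField k L M)).injective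

variable (k L M) in
theorem exists_algHom_germ_left : ∃ (U : Ultrafilter (Finset M))
    (φ : TensorFractionField k L M →ₐ[k] Germ (U : Filter (Finset M)) L),
      (∀ x, φ (inl k L M x) = (x : Germ (U : Filter (Finset M)) L)) ∧
        ∀ σ z, φ (congr L (σ, 1) z) = (φ z).map σ := by
  obtain ⟨U, ⟨j⟩⟩ := exists_algHom_germ k M
  have hψ := tensorToGerm_injective (L := L) j.toRingHom.injective
  refine ⟨U, IsFractionRing.liftAlgHom hψ, fun x => ?_, fun σ z => ?_⟩
  · refine (IsFractionRing.lift_algebraMap hψ (x ⊗ₜ 1)).trans ((tensorToGerm_tmul j x 1).trans ?_)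
    rw [map_one, map_one, mul_one]
  · exact lift_fieldEquivOfAlgEquiv hψ (Algebra.TensorProduct.congr σ .refl)
      (germMap (U : Filter (Finset M)) (σ : L →ₐ[k] L)) (tensorToGerm_congr j σ) z

variable (k L M) in
theorem exists_algHom_germ_right : ∃ (U : Ultrafilter (Finset L))
    (φ : TensorFractionField k L M →ₐ[k] Germ (U : Filter (Finset L)) M),
      (∀ y, φ (inr k L M y) = (y : Germ (U : Filter (Finset L)) M)) ∧
        ∀ τ z, φ (congr L (1, τ) z) = (φ z).map τ := by
  obtain ⟨U, ⟨j⟩⟩ := exists_algHom_germ k L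
  let ψ := (tensorToGerm M j).comp (Algebra.TensorProduct.comm k L M).toAlgHom
  have hψ : Function.Injective ψ :=
    (tensorToGerm_injective (L := M) j.toRingHom.injective).comp (AlgEquiv.injective _)
  refine ⟨U, IsFractionRing.liftAlgHom hψ, fun y => ?_, fun τ z => ?_⟩
  · refine (IsFractionRing.lift_algebraMap hψ (1 ⊗ₜ y)).trans ((tensorToGerm_tmul j y 1).trans ?_)
    rw [map_one, map_one, mul_one]
  · refine lift_fieldEquivOfAlgEquiv hψ (Algebra.TensorProduct.congr .refl τ)
      (germMap (U : Filter (Finset L)) (τ : M →ₐ[k] M)) (fun x => ?_) z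
    refine Eq.trans (congrArg (tensorToGerm M j) ?_) (tensorToGerm_congr j τ _)
    induction x with
    | zero => simp only [map_zero]
    | add x x' hx hx' => simp only [map_add, hx, hx']
    | tmul x y => rfl

end TensorFractionField

end TensorFractionField

noncomputable section

open TensorFractionField

variable {k K₁ K₂ L₁ L₂ D₁ D₂ : Type*} [Field k] [IsAlgClosed k] [Field K₁] [Field K₂] [Field L₁]
  [Field L₂] [Algebra k K₁] [Algebra k K₂] [Algebra K₁ L₁] [Algebra K₂ L₂] [Algebra k L₁]
  [Algebra k L₂] [IsScalarTower k K₁ L₁] [IsScalarTower k K₂ L₂] [DivisionRing D₁]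
  [DivisionRing D₂] [Algebra K₁ D₁] [Algebra K₂ D₂] [Algebra k D₁] [Algebra k D₂]
  [IsScalarTower k K₁ D₁] [IsScalarTower k K₂ D₂] {n₁ n₂ : ℕ}

variable (k K₁ K₂ L₁ L₂) in
/-- The action of the Galois group of the first factor. -/
def leftGalois : Gal(L₁/K₁) →* (TensorFractionField k L₁ L₂ ≃ₐ[k] TensorFractionField k L₁ L₂) :=
  (congr L₁).comp ((MonoidHom.inl _ _).comp (AlgEquiv.restrictScalarsHom k))

variable (k K₁ K₂ L₁ L₂) in
/-- The action of the Galois group of the second factor. -/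
def rightGalois : Gal(L₂/K₂) →* (TensorFractionField k L₁ L₂ ≃ₐ[k] TensorFractionField k L₁ L₂) :=
  (congr L₁).comp ((MonoidHom.inr _ _).comp (AlgEquiv.restrictScalarsHom k))

namespace GaloisSplitting

variable (k L₂) in
/-- The extension of a splitting from `L₁` to the field of fractions of `L₁ ⊗ L₂`. -/
def left (S : GaloisSplitting K₁ L₁ D₁ n₁) :
    SemilinearSplitting (leftGalois k K₁ L₁ L₂) D₁ n₁ :=
  S.baseChange (inl k L₁ L₂) fun _ _ => congr_inl _ _

variable (k L₁) in
/-- The extension of a splitting from `L₂` to the field of fractions of `L₁ ⊗ L₂`. -/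
def right (S : GaloisSplitting K₂ L₂ D₂ n₂) :
    SemilinearSplitting (rightGalois k K₂ L₁ L₂) D₂ n₂ :=
  S.baseChange (inr k L₁ L₂) fun _ _ => congr_inr _ _

theorem hasFullIndex_left [FiniteDimensional K₁ L₁] {S : GaloisSplitting K₁ L₁ D₁ n₁}
    (hS : S.HasFullIndex) : (S.left k L₂).HasFullIndex := by
  obtain ⟨U, φ, hφ, hφσ⟩ := exists_algHom_germ_left k L₁ L₂
  exact hS.baseChange _ φ.toRingHom (fun _ _ => hφσ _ _) hφ

theorem hasFullIndex_right [FiniteDimensional K₂ L₂] {S : GaloisSplitting K₂ L₂ D₂ n₂}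
    (hS : S.HasFullIndex) : (S.right k L₁).HasFullIndex := by
  obtain ⟨U, φ, hφ, hφτ⟩ := exists_algHom_germ_right k L₁ L₂
  exact hS.baseChange _ φ.toRingHom (fun _ _ => hφτ _ _) hφ

theorem map_left_rep (S : GaloisSplitting K₁ L₁ D₁ n₁) (τ : Gal(L₂/K₂)) (x : D₁) :
    ((S.left k L₂).rep x).map (rightGalois k K₂ L₁ L₂ τ) = (S.left k L₂).rep x :=
  Matrix.ext fun _ _ => congr_inl _ _

theorem map_right_rep (S : GaloisSplitting K₂ L₂ D₂ n₂) (σ : Gal(L₁/K₁)) (y : D₂) :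
    ((S.right k L₁).rep y).map (leftGalois k K₁ L₁ L₂ σ) = (S.right k L₁).rep y :=
  Matrix.ext fun _ _ => congr_inr _ _

end GaloisSplitting

end

end CommonEmbedding

universe u in
open CommonEmbedding in
theorem exists_common_embedding_over_algebraically_closed_general
    (k : Type u) [Field k] [IsAlgClosed k]
    (K₁ K₂ : Type u) [Field K₁] [Field K₂] [Algebra k K₁] [Algebra k K₂]
    (D₁ D₂ : Type u) [DivisionRing D₁] [DivisionRing D₂]
    [Algebra K₁ D₁] [Algebra K₂ D₂]
    [FiniteDimensional K₁ D₁] [FiniteDimensional K₂ D₂]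
    (hc₁ : Subalgebra.center K₁ D₁ = ⊥) (hc₂ : Subalgebra.center K₂ D₂ = ⊥)
    [Algebra k D₁] [Algebra k D₂] [IsScalarTower k K₁ D₁] [IsScalarTower k K₂ D₂] :
    ∃ (E : Type u) (_ : DivisionRing E) (_ : Algebra k E),
      FiniteDimensional (Subring.center E) E ∧ Nonempty (D₁ →ₐ[k] E) ∧ Nonempty (D₂ →ₐ[k] E) := by
  have : Algebra.IsCentral K₁ D₁ := ⟨hc₁.le⟩
  have : Algebra.IsCentral K₂ D₂ := ⟨hc₂.le⟩
  obtain ⟨n₁, L₁, hn₁, hD₁, _, _, ⟨S₁⟩⟩ := exists_galoisSplitting K₁ D₁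
  obtain ⟨n₂, L₂, hn₂, hD₂, _, _, ⟨S₂⟩⟩ := exists_galoisSplitting K₂ D₂
  have : NeZero n₁ := ⟨hn₁⟩
  have : NeZero n₂ := ⟨hn₂⟩
  have hS₁ := GaloisSplitting.hasFullIndex_left (k := k) (L₂ := L₂) (S₁.hasFullIndex hD₁ hn₁)
  have hS₂ := GaloisSplitting.hasFullIndex_right (k := k) (L₁ := L₁) (S₂.hasFullIndex hD₂ hn₂)
  exact SemilinearSplitting.exists_common_embedding hS₁ hS₂ S₂.map_right_rep S₁.map_left_rep

/-- Simultaneous embedding over an algebraically closed base field `k`.  If `D₁`, `D₂`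
are division rings, finite-dimensional over their centers `K₁`, `K₂`, where each `Kᵢ`
is a finitely generated field extension of `k`, then there is a division ring `E`,
finite-dimensional over its center, admitting injective `k`-algebra homomorphisms of
both `D₁` and `D₂`. -/
theorem exists_common_embedding_over_algebraically_closed
    (k : Type) [Field k] [IsAlgClosed k]
    (K₁ K₂ : Type) [Field K₁] [Field K₂] [Algebra k K₁] [Algebra k K₂]
    (hfg₁ : (⊤ : IntermediateField k K₁).FG) (hfg₂ : (⊤ : IntermediateField k K₂).FG)
    (D₁ D₂ : Type) [DivisionRing D₁] [DivisionRing D₂]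
    [Algebra K₁ D₁] [Algebra K₂ D₂]
    [FiniteDimensional K₁ D₁] [FiniteDimensional K₂ D₂]
    (hc₁ : Subalgebra.center K₁ D₁ = ⊥) (hc₂ : Subalgebra.center K₂ D₂ = ⊥)
    [Algebra k D₁] [Algebra k D₂] [IsScalarTower k K₁ D₁] [IsScalarTower k K₂ D₂] :
    ∃ E : FinDimDivisionAlgebraOver k,
      (∃ f₁ : D₁ →ₐ[k] E.carrier, Function.Injective f₁) ∧
      (∃ f₂ : D₂ →ₐ[k] E.carrier, Function.Injective f₂) := by
  obtain ⟨E, _, _, _, ⟨f₁⟩, ⟨f₂⟩⟩ :=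
    exists_common_embedding_over_algebraically_closed_general k K₁ K₂ D₁ D₂ hc₁ hc₂
  exact ⟨⟨E⟩, ⟨f₁, f₁.toRingHom.injective⟩, ⟨f₂, f₂.toRingHom.injective⟩⟩
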